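/- Let G be a (possibly infinite) graph and T ⊆ V(G) such that G is inner Eulerian with respect to T (there is no X ⊆ V(G)∖T with d_G(X) an odd natural number), and assume that for each t ∈ T there is a system 𝒫_t of pairwise edge-disjoint T-paths covering δ(t). Then for every t ∈ T and every edge e ∈ δ(t) there exists a T-path P through e such that in G − E(P), for each t' ∈ T there is still a system of pairwise edge-disjoint T-paths covering all edges of G − E(P) incident with t', and G − E(P) remains inner Eulerian w.r.t. T. -/

import Mathlib

/-!
Common definitions: multigraphs (parallel edges allowed, no loops), walks,
paths, cuts, waves and related notions used in the statements below.
-/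

universe u v

/-- A multigraph with vertex type `V` and edge type `E`: every edge is assigned
an unordered pair of *distinct* end-vertices (parallel edges allowed, no loops). -/
structure Multigraph (V : Type u) (E : Type v) : Type (max u v) where
  inc : E → Sym2 V
  not_isDiag : ∀ e, ¬ (inc e).IsDiag

namespace Multigraph

variable {V : Type u} {E : Type v}

/-- Walks in a multigraph, recorded together with the edges they traverse. -/
inductive Walk (G : Multigraph V E) : V → V → Type (max u v)
  | nil (v : V) : Walk G v v
  | cons {u v w : V} (e : E) (he : G.inc e = s(u, v)) (p : Walk G v w) : Walk G u w

namespace Walk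

variable {G : Multigraph V E}

/-- The list of vertices visited by a walk. -/
def support : ∀ {u w : V}, G.Walk u w → List V
  | _, _, .nil v => [v]
  | u, _, .cons _ _ p => u :: p.support

/-- The list of edges traversed by a walk. -/
def edges : ∀ {u w : V}, G.Walk u w → List E
  | _, _, .nil _ => []
  | _, _, .cons e _ p => e :: p.edges

end Walk

/-- `δ_G(v)`: the set of edges incident with the vertex `v`. -/
def inci (G : Multigraph V E) (v : V) : Set E := {e | v ∈ G.inc e}

/-- `δ_G(X)`: the set of edges with exactly one end-vertex in `X`. -/
def cut (G : Multigraph V E) (X : Set V) : Set E :=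
  {e | ∃ x y, G.inc e = s(x, y) ∧ x ∈ X ∧ y ∉ X}

/-- Connectedness of a multigraph. -/
def Connected (G : Multigraph V E) : Prop := ∀ u v : V, Nonempty (G.Walk u v)

/-- A `T`-path: a path connecting two distinct vertices of `T`
with no internal vertex in `T`. -/
structure TPath (G : Multigraph V E) (T : Set V) : Type (max u v) where
  first : V
  last : V
  walk : G.Walk first last
  first_mem : first ∈ T
  last_mem : last ∈ T
  ne : first ≠ last
  support_nodup : walk.support.Nodup
  internal : ∀ x ∈ walk.support, x ∈ T → x = first ∨ x = last

/-- A system of pairwise edge-disjoint `T`-paths. -/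
def TPathDisjoint (G : Multigraph V E) {T : Set V} (P : Set (G.TPath T)) : Prop :=
  ∀ p ∈ P, ∀ q ∈ P, p ≠ q → ∀ e, e ∈ p.walk.edges → e ∉ q.walk.edges

/-- An `st`-path: a path from `s` to `t` (no internal vertex is `s` or `t`,
which is automatic as the vertices of a path are distinct). -/
structure STPath (G : Multigraph V E) (s t : V) : Type (max u v) where
  walk : G.Walk s t
  support_nodup : walk.support.Nodup

/-- A system of pairwise edge-disjoint `st`-paths. -/
def STPathDisjoint (G : Multigraph V E) {s t : V} (P : Set (G.STPath s t)) : Prop :=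
  ∀ p ∈ P, ∀ q ∈ P, p ≠ q → ∀ e, e ∈ p.walk.edges → e ∉ q.walk.edges

/-- A nontrivial path starting at `s`. -/
structure SPath (G : Multigraph V E) (s : V) : Type (max u v) where
  last : V
  walk : G.Walk s last
  support_nodup : walk.support.Nodup
  edges_ne_nil : walk.edges ≠ []

/-- A system of pairwise edge-disjoint paths starting at `s`. -/
def SPathDisjoint (G : Multigraph V E) {s : V} (W : Set (G.SPath s)) : Prop :=
  ∀ p ∈ W, ∀ q ∈ W, p ≠ q → ∀ e, e ∈ p.walk.edges → e ∉ q.walk.edges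

/-- The set of last edges of a system of paths starting at `s`. -/
def lastEdges (G : Multigraph V E) {s : V} (W : Set (G.SPath s)) : Set E :=
  {e | ∃ p ∈ W, p.walk.edges.getLast? = some e}

/-- `C` is a cut separating `A` from `B`. -/
def SepCut (G : Multigraph V E) (A B : Set V) (C : Set E) : Prop :=
  ∃ X : Set V, A ⊆ X ∧ (∀ b ∈ B, b ∉ X) ∧ C = G.cut X

/-- `C` is a `⊆`-minimal cut separating `A` from `B`. -/
def IsMinSepCut (G : Multigraph V E) (A B : Set V) (C : Set E) : Prop :=
  G.SepCut A B C ∧ ∀ D : Set E, G.SepCut A B D → D ⊆ C → D = C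

/-- An `s`-`B`-wave: a system of pairwise edge-disjoint paths starting at `s`
whose set of last edges is a `⊆`-minimal cut separating `s` from `B`. -/
def IsWave (G : Multigraph V E) (s : V) (B : Set V) (W : Set (G.SPath s)) : Prop :=
  G.SPathDisjoint W ∧ G.IsMinSepCut {s} B (G.lastEdges W)

/-- An Erdős–Menger `st`-cut: an `st`-cut which is orthogonal to some system of
pairwise edge-disjoint `st`-paths, i.e. it consists of exactly one edge chosen
from each path of the system. -/
def IsEMCut (G : Multigraph V E) (s t : V) (C : Set E) : Prop :=
  (∃ X : Set V, s ∈ X ∧ t ∉ X ∧ C = G.cut X) ∧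
  ∃ P : Set (G.STPath s t), G.STPathDisjoint P ∧
    (∀ p ∈ P, ∃! e, e ∈ C ∧ e ∈ p.walk.edges) ∧
    (∀ e ∈ C, ∃ p ∈ P, e ∈ p.walk.edges)

/-- The order `≼` on `st`-cuts: the `s`-side of `C` is contained in the
`s`-side of `D` (in a connected graph the `s`-side is unique). -/
def CutLE (G : Multigraph V E) (s t : V) (C D : Set E) : Prop :=
  ∃ X Y : Set V, s ∈ X ∧ t ∉ X ∧ C = G.cut X ∧ s ∈ Y ∧ t ∉ Y ∧ D = G.cut Y ∧ X ⊆ Y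

/-- A cut of the form `C_W` for some `st`-wave `W`. -/
def IsWaveCut (G : Multigraph V E) (s t : V) (C : Set E) : Prop :=
  ∃ W : Set (G.SPath s), G.IsWave s {t} W ∧ G.lastEdges W = C

/-- Deletion of a set of edges. -/
def deleteEdges (G : Multigraph V E) (F : Set E) : Multigraph V {e : E // e ∉ F} where
  inc e := G.inc e.1
  not_isDiag e := G.not_isDiag e.1

open Classical in
/-- Contraction of the vertex set `X` to the vertex `s` (edges inside `X` are
deleted, edges leaving `X` are redirected to `s`). -/
noncomputable def contract (G : Multigraph V E) (X : Set V) (s : V) :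
    Multigraph V {e : E // ¬ (Sym2.map (fun v => if v ∈ X then s else v) (G.inc e)).IsDiag} where
  inc e := Sym2.map (fun v => if v ∈ X then s else v) (G.inc e.1)
  not_isDiag e := e.2

/-- Reachability inside a set `S` of vertices. -/
def ReachableIn (G : Multigraph V E) (S : Set V) (x y : V) : Prop :=
  ∃ p : G.Walk x y, ∀ z ∈ p.support, z ∈ S

/-- `Y` is (the vertex set of) a connected component of the subgraph of `G`
induced by `S`. -/
def IsComponentOf (G : Multigraph V E) (Y S : Set V) : Prop :=
  Y.Nonempty ∧ Y ⊆ S ∧ ∀ x ∈ Y, ∀ y ∈ S, (G.ReachableIn S x y ↔ y ∈ Y)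

/-- A cycle in a multigraph (a closed walk with distinct edges whose
vertices are distinct except that the first one equals the last one). -/
structure Cycle (G : Multigraph V E) : Type (max u v) where
  base : V
  walk : G.Walk base base
  edges_ne_nil : walk.edges ≠ []
  edges_nodup : walk.edges.Nodup
  support_tail_nodup : walk.support.tail.Nodup

/-- A graph is Eulerian if its edge set can be partitioned into
edge sets of cycles. -/
def IsEulerian (G : Multigraph V E) : Prop :=
  ∃ C : Set G.Cycle,
    (∀ c ∈ C, ∀ d ∈ C, c ≠ d → ∀ e, e ∈ c.walk.edges → e ∉ d.walk.edges) ∧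
    ∀ e : E, ∃ c ∈ C, e ∈ c.walk.edges

/-- A `T`-partition: a family `{A t : t ∈ T}` of pairwise disjoint vertex sets
with `A t ∩ T = {t}`. -/
def IsTPartition (T : Set V) (A : V → Set V) : Prop :=
  (∀ t ∈ T, A t ∩ T = {t}) ∧
  ∀ t₁ ∈ T, ∀ t₂ ∈ T, t₁ ≠ t₂ → Disjoint (A t₁) (A t₂)

end Multigraph

/-!
If the edge `e` at the terminal `t` leads to another terminal, it can be deleted on its own.
Otherwise `e = tz` with `z` a nonterminal, and we split off `e` together with some edge `f = zw`:
`f` is deleted and `e` becomes an edge from `t` to `w`. Inner Eulerian graphs stay inner Eulerian,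
a solution for the split graph lifts back, and iterating along a finite path terminates. The point
is to choose `f` so that every terminal remains linkable.

A *tight set* of `t` separates `t` from the other terminals and has its cut linked to both sides.
By an augmenting path argument, a system of paths of `t` missing one edge can be completed unless
there is a tight set; if the graph is inner Eulerian, a parity argument produces the missing path
even when the system has only lost one of its paths.

* If no terminal other than `t` needs `e`, take `f` on the path of `t` through `e`. Every other
  terminal loses at most the path through `f`, which parity restores.
* If `t'` is not linkable without `e`, uncrossing shows that `t'` is the only such terminal. Take
  `f` on the path of `t'` through `e`. There is a tight set of `t'` containing `z` and `w`, and
  uncrossing it with a tight set of `t` shows that `t` remains linkable.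
-/

namespace Multigraph

variable {V : Type u} {E : Type v} {G G' : Multigraph V E}

section Reachability

variable {D : Set (E × V)} {F F' : Set E} {X : Set V} {u v w x : V} {e : E}
  {l l₁ l₂ : List (E × V)}

theorem mem_cut_iff {a b : V} (h : G.inc e = s(a, b)) : e ∈ G.cut X ↔ ¬(a ∈ X ↔ b ∈ X) := by
  constructor
  · rintro ⟨x, y, h', hx, hy⟩
    rw [h, Sym2.eq_iff] at h'
    rcases h' with ⟨rfl, rfl⟩ | ⟨rfl, rfl⟩ <;> tauto
  · intro h'
    by_cases ha : a ∈ X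
    · exact ⟨a, b, h, ha, by tauto⟩
    · exact ⟨b, a, by rw [h, Sym2.eq_swap], by tauto, ha⟩

theorem exists_inc_eq_of_mem (h : u ∈ G.inc e) : ∃ w, w ≠ u ∧ G.inc e = s(u, w) := by
  obtain ⟨w, hw⟩ := h
  exact ⟨w, fun huw => G.not_isDiag e (by rw [hw, huw]; exact rfl), hw⟩

theorem ne_of_inc_eq (h : G.inc e = s(u, w)) : u ≠ w := by
  rintro rfl
  exact G.not_isDiag e (by rw [h]; rfl)

/-- `G.IsDartWalk u l w`: the list `l` of darts, a dart being an edge together with its head, is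
a walk from `u` to `w`. Unlike `Multigraph.Walk`, such lists remain meaningful when the graph is
modified, and they remember in which direction each edge is traversed. -/
def IsDartWalk (G : Multigraph V E) : V → List (E × V) → V → Prop
  | u, [], w => u = w
  | u, d :: l, w => G.inc d.1 = s(u, d.2) ∧ G.IsDartWalk d.2 l w

/-- Directed reachability along the darts in `D`, a dart being an edge together with its head. -/
def DartReach (G : Multigraph V E) (D : Set (E × V)) : V → V → Prop :=
  Relation.ReflTransGen fun x y => ∃ e, (e, y) ∈ D ∧ G.inc e = s(x, y)

/-- Reachability in the spanning subgraph with edge set `F`. -/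
def Reach (G : Multigraph V E) (F : Set E) : V → V → Prop :=
  G.DartReach (Prod.fst ⁻¹' F)

theorem Reach.mono (hF : F ⊆ F') (h : G.Reach F u w) : G.Reach F' u w :=
  Relation.ReflTransGen.mono (fun _ _ ⟨e, he, hinc⟩ => ⟨e, hF he, hinc⟩) _ _ h

@[refl]
theorem Reach.refl : G.Reach F u u := Relation.ReflTransGen.refl

theorem Reach.trans (h : G.Reach F u v) (h' : G.Reach F v w) : G.Reach F u w :=
  Relation.ReflTransGen.trans h h'

theorem Reach.single (he : e ∈ F) (hinc : G.inc e = s(u, w)) : G.Reach F u w :=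
  Relation.ReflTransGen.single ⟨e, he, hinc⟩

@[symm]
theorem Reach.symm (h : G.Reach F u w) : G.Reach F w u := by
  induction h with
  | refl => rfl
  | tail _ h ih =>
    obtain ⟨e, he, hinc⟩ := h
    exact Reach.trans (Reach.single (F := F) he (hinc.trans Sym2.eq_swap)) ih

theorem Reach.congr (hF : ∀ e ∈ F, G.inc e = G'.inc e) (h : G.Reach F u w) : G'.Reach F u w :=
  Relation.ReflTransGen.mono (fun _ _ ⟨e, he, hinc⟩ => ⟨e, he, hF e he ▸ hinc⟩) _ _ h

/-- The edges with both ends in `X`. -/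
def inside (G : Multigraph V E) (X : Set V) : Set E := {e | ∀ v ∈ G.inc e, v ∈ X}

theorem Reach.exists_cut_edge (h : G.Reach F u w) (hu : u ∈ X) (hw : w ∉ X) :
    ∃ e ∈ F, ∃ x y, G.inc e = s(x, y) ∧ x ∈ X ∧ y ∉ X ∧
      G.Reach (F ∩ G.inside X) u x := by
  induction h using Relation.ReflTransGen.head_induction_on with
  | refl => exact absurd hu hw
  | @head a c h _ ih =>
    obtain ⟨e, he, hinc⟩ := h
    by_cases hc : c ∈ X
    · obtain ⟨f, hf, x, y, hxy, hx, hy, hreach⟩ := ih hc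
      have hinside : e ∈ G.inside X := by
        intro v hv
        rw [hinc, Sym2.mem_iff] at hv
        rcases hv with rfl | rfl <;> assumption
      exact ⟨f, hf, x, y, hxy, hx, hy, Reach.trans (Reach.single ⟨he, hinside⟩ hinc) hreach⟩
    · exact ⟨e, he, a, c, hinc, hu, hc, Reach.refl⟩

theorem Reach.avoid_edge {a b : V} (hinc : G.inc e = s(a, b)) (h : G.Reach F u w) :
    G.Reach (F \ {e}) u w ∨ G.Reach (F \ {e}) u a ∨ G.Reach (F \ {e}) u b := by
  induction h with
  | refl => exact Or.inl Reach.refl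
  | @tail x y _ h ih =>
    obtain ⟨f, hf, hxy⟩ := h
    rcases ih with ih | ih
    · by_cases hfe : f = e
      · subst hfe
        rw [hinc, Sym2.eq_iff] at hxy
        rcases hxy with ⟨rfl, rfl⟩ | ⟨rfl, rfl⟩
        exacts [Or.inr (Or.inl ih), Or.inr (Or.inr ih)]
      · exact Or.inl (ih.trans (Reach.single (e := f) ⟨hf, hfe⟩ hxy))
    · exact Or.inr ih

theorem isDartWalk_append :
    G.IsDartWalk u (l₁ ++ l₂) w ↔ ∃ v, G.IsDartWalk u l₁ v ∧ G.IsDartWalk v l₂ w := by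
  induction l₁ generalizing u with
  | nil => simp [IsDartWalk]
  | cons d l ih => simp [IsDartWalk, ih, and_assoc]

theorem IsDartWalk.reach (h : G.IsDartWalk u l w) (hF : ∀ d ∈ l, d.1 ∈ F) : G.Reach F u w := by
  induction l generalizing u with
  | nil => cases h; rfl
  | cons d l ih =>
    exact (Reach.single (hF d List.mem_cons_self) h.1).trans
      (ih h.2 fun d' hd' => hF d' (List.mem_cons_of_mem d hd'))

theorem IsDartWalk.exists_append (h : G.IsDartWalk u l w) (hx : x ∈ u :: l.map Prod.snd) :
    ∃ l₁ l₂, l = l₁ ++ l₂ ∧ G.IsDartWalk u l₁ x ∧ G.IsDartWalk x l₂ w := by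
  induction l generalizing u with
  | nil =>
    obtain rfl : x = u := by simpa using hx
    exact ⟨[], [], rfl, rfl, h⟩
  | cons d l ih =>
    rcases List.mem_cons.1 hx with rfl | hx
    · exact ⟨[], d :: l, rfl, rfl, h⟩
    · obtain ⟨l₁, l₂, rfl, h₁, h₂⟩ := ih h.2 (by simpa using hx)
      exact ⟨d :: l₁, l₂, rfl, ⟨h.1, h₁⟩, h₂⟩

theorem IsDartWalk.forall_notMem (h : G.IsDartWalk u l w)
    (hX : ∀ d ∈ l, ∀ a, G.inc d.1 = s(a, d.2) → a ∉ X → d.2 ∉ X) (hu : u ∉ X) :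
    w ∉ X ∧ ∀ d ∈ l, d.1 ∈ G.inside Xᶜ := by
  induction l generalizing u with
  | nil => cases h; exact ⟨hu, by simp⟩
  | cons d l ih =>
    obtain ⟨hd, hl⟩ := List.forall_mem_cons.1 hX
    have hdX := hd u h.1 hu
    obtain ⟨hw, hlX⟩ := ih h.2 hl hdX
    refine ⟨hw, List.forall_mem_cons.2 ⟨fun v hv => ?_, hlX⟩⟩
    rw [h.1, Sym2.mem_iff] at hv
    rcases hv with rfl | rfl <;> assumption

theorem IsDartWalk.forall_mem (h : G.IsDartWalk u l w)
    (hX : ∀ d ∈ l, ∀ a, G.inc d.1 = s(a, d.2) → a ∉ X → d.2 ∉ X) (hw : w ∈ X) :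
    ∀ d ∈ l, d.1 ∈ G.inside X := by
  induction l generalizing u with
  | nil => simp
  | cons d l ih =>
    refine List.forall_mem_cons.2 ⟨fun v hv => ?_, ih h.2 (List.forall_mem_cons.1 hX).2⟩
    rw [h.1, Sym2.mem_iff] at hv
    by_contra hvX
    rcases hv with rfl | rfl
    exacts [(h.forall_notMem hX hvX).1 hw,
      (h.2.forall_notMem (List.forall_mem_cons.1 hX).2 hvX).1 hw]

theorem IsDartWalk.mem_support (h : G.IsDartWalk u l w) {d : E × V} (hd : d ∈ l)
    (hx : x ∈ G.inc d.1) : x ∈ u :: l.map Prod.snd := by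
  induction l generalizing u with
  | nil => simp at hd
  | cons d' l ih =>
    rcases List.mem_cons.1 hd with rfl | hd
    · rw [h.1, Sym2.mem_iff] at hx
      rcases hx with rfl | rfl <;> simp
    · exact List.mem_cons_of_mem u (ih h.2 hd)

theorem IsDartWalk.head_mem_inc (h : G.IsDartWalk u l w) {d : E × V} (hd : d ∈ l) :
    d.2 ∈ G.inc d.1 := by
  induction l generalizing u with
  | nil => simp at hd
  | cons d' l ih =>
    rcases List.mem_cons.1 hd with rfl | hd
    · rw [h.1]; exact Sym2.mem_mk_right _ _
    · exact ih h.2 hd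

theorem IsDartWalk.edges_nodup (h : G.IsDartWalk u l w) (hnodup : (u :: l.map Prod.snd).Nodup) :
    (l.map Prod.fst).Nodup := by
  induction l generalizing u with
  | nil => simp
  | cons d l ih =>
    obtain ⟨hu, hl⟩ := List.nodup_cons.1 hnodup
    refine List.nodup_cons.2 ⟨fun hd => ?_, ih h.2 hl⟩
    obtain ⟨d', hd', hdd'⟩ := List.mem_map.1 hd
    exact hu (h.2.mem_support hd' (by rw [hdd', h.1]; exact Sym2.mem_mk_left _ _))

theorem IsDartWalk.exists_first_mem {Z : Set V}
    (h : G.IsDartWalk u l w) (hu : u ∉ Z) (hw : w ∈ Z) :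
    ∃ l₁ d l₂ v, l = l₁ ++ d :: l₂ ∧ G.IsDartWalk u l₁ v ∧ G.inc d.1 = s(v, d.2) ∧
      v ∉ Z ∧ d.2 ∈ Z ∧ ∀ d' ∈ l₁, d'.2 ∉ Z := by
  induction l generalizing u with
  | nil => cases h; exact absurd hw hu
  | cons d l ih =>
    by_cases hd : d.2 ∈ Z
    · exact ⟨[], d, l, u, rfl, rfl, h.1, hu, hd, by simp⟩
    · obtain ⟨l₁, d', l₂, v, rfl, hl₁, hinc, hv, hd', hZ⟩ := ih h.2 hd
      exact ⟨d :: l₁, d', l₂, v, rfl, ⟨h.1, hl₁⟩, hinc, hv, hd', List.forall_mem_cons.2 ⟨hd, hZ⟩⟩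

theorem DartReach.exists_nodup (h : G.DartReach D u w) :
    ∃ l, G.IsDartWalk u l w ∧ (∀ d ∈ l, d ∈ D) ∧ (u :: l.map Prod.snd).Nodup := by
  induction h using Relation.ReflTransGen.head_induction_on with
  | refl => exact ⟨[], rfl, by simp, by simp⟩
  | @head a c h _ ih =>
    obtain ⟨e, he, hinc⟩ := h
    obtain ⟨l, hl, hlD, hnodup⟩ := ih
    by_cases ha : a ∈ c :: l.map Prod.snd
    · obtain ⟨l₁, l₂, rfl, h₁, h₂⟩ := hl.exists_append ha
      refine ⟨l₂, h₂, fun d hd => hlD d (List.mem_append_right _ hd), ?_⟩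
      rcases List.eq_nil_or_concat l₁ with rfl | ⟨l', d, rfl⟩
      · cases h₁; exact hnodup
      · obtain ⟨v, -, -, hv⟩ := isDartWalk_append.1 (List.concat_eq_append ▸ h₁)
        obtain rfl : d.2 = a := hv
        simp only [List.concat_eq_append, List.map_append, List.append_assoc] at hnodup
        exact (List.nodup_append.1 (List.nodup_cons.1 hnodup).2).2.1
    · exact ⟨(e, c) :: l, ⟨hinc, hl⟩, List.forall_mem_cons.2 ⟨he, hlD⟩,
        List.nodup_cons.2 ⟨ha, hnodup⟩⟩

theorem Reach.exists_nodup (h : G.Reach F u w) :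
    ∃ l, G.IsDartWalk u l w ∧ (∀ d ∈ l, d.1 ∈ F) ∧ (u :: l.map Prod.snd).Nodup :=
  DartReach.exists_nodup h

theorem Reach.exists_first_edge (h : G.Reach F u w) (huw : u ≠ w) :
    ∃ f ∈ F, ∃ v, G.inc f = s(u, v) ∧ G.Reach (F \ {f}) v w := by
  obtain ⟨l, hl, hlF, hnodup⟩ := h.exists_nodup
  cases l with
  | nil => exact absurd hl huw
  | cons d l =>
    have hd : d.1 ∉ l.map Prod.fst := (List.nodup_cons.1 (hl.edges_nodup hnodup)).1
    exact ⟨d.1, hlF d List.mem_cons_self, d.2, hl.1, hl.2.reach fun d' hd' =>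
      ⟨hlF d' (List.mem_cons_of_mem d hd'), fun h => hd (h ▸ List.mem_map_of_mem hd')⟩⟩

theorem Reach.exists_nodup_cons (h : G.Reach F u w) (huw : u ≠ w)
    (hF : ∀ f ∈ F, u ∈ G.inc f → f = e) :
    ∃ v l, G.IsDartWalk u ((e, v) :: l) w ∧ (∀ d ∈ (e, v) :: l, d.1 ∈ F) ∧
      (u :: ((e, v) :: l).map Prod.snd).Nodup := by
  obtain ⟨l, hl, hlF, hnodup⟩ := h.exists_nodup
  cases l with
  | nil => exact absurd hl huw
  | cons d l =>
    obtain rfl : d.1 = e :=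
      hF d.1 (hlF d List.mem_cons_self) (by rw [hl.1]; exact Sym2.mem_mk_left _ _)
    exact ⟨d.2, l, hl, hlF, hnodup⟩

open Classical in
theorem IsDartWalk.even_countP_cut (h : G.IsDartWalk u l w) (X : Set V) :
    Even ((l.map Prod.fst).countP fun e => decide (e ∈ G.cut X)) ↔ (u ∈ X ↔ w ∈ X) := by
  induction l generalizing u with
  | nil => cases h; simp
  | cons d l ih =>
    have hcut := mem_cut_iff (X := X) h.1
    have hl := ih h.2
    rw [List.map_cons, List.countP_cons]
    by_cases hd : d.1 ∈ G.cut X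
    · simp only [hd, decide_true, if_true, Nat.even_add_one, hl]; tauto
    · simp only [hd, decide_false, Bool.false_eq_true, if_false, add_zero, hl]; tauto

theorem IsDartWalk.even_ncard_cut (h : G.IsDartWalk u l w) (hnodup : (l.map Prod.fst).Nodup)
    (X : Set V) : Even ({e | e ∈ l.map Prod.fst} ∩ G.cut X).ncard ↔ (u ∈ X ↔ w ∈ X) := by
  classical
  have hfilter : {e | e ∈ l.map Prod.fst} ∩ G.cut X =
      (((l.map Prod.fst).filter fun e => decide (e ∈ G.cut X)).toFinset : Set E) := by
    ext e; simp
  rw [← h.even_countP_cut X, hfilter, Set.ncard_coe_finset,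
    List.toFinset_card_of_nodup (hnodup.filter _), List.countP_eq_length_filter]

end Reachability

section Linkages

variable {S S' K P P' H H' : Set E} {R R' A X : Set V} {t s : V} {C C' D : Set E}
  {F F' I : E → Set E} {g : E}

/-- A linkage of the edges `C ⊆ δ(t)` to the vertex set `R`: pairwise disjoint edge sets
`F c ⊆ S`, one for each `c ∈ C`, such that `F c` contains a path from `t` to `R` and `c` is the
only edge of `F c` at `t`. Keeping edge sets instead of paths makes it trivial to modify them;
a path is extracted only where one is needed. -/
structure IsLinkage (G : Multigraph V E) (S : Set E) (t : V) (R : Set V) (C : Set E)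
    (F : E → Set E) : Prop where
  subset : ∀ c ∈ C, F c ⊆ S
  mem : ∀ c ∈ C, c ∈ F c
  incident : ∀ c ∈ C, t ∈ G.inc c
  eq_of_incident : ∀ c ∈ C, ∀ e ∈ F c, t ∈ G.inc e → e = c
  reach : ∀ c ∈ C, ∃ s ∈ R, G.Reach (F c) t s
  pairwiseDisjoint : C.PairwiseDisjoint F

/-- The linkability condition for `t` in the spanning subgraph with edge set `S`. -/
def Linkable (G : Multigraph V E) (S : Set E) (T : Set V) (t : V) : Prop :=
  ∃ F, G.IsLinkage S t (T \ {t}) (S ∩ G.inci t) F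

theorem IsLinkage.eq_of_mem {c c' e : E} (h : G.IsLinkage S t R C F) (hc : c ∈ C) (hc' : c' ∈ C)
    (he : e ∈ F c) (he' : e ∈ F c') : c = c' :=
  h.pairwiseDisjoint.elim_set hc hc' e he he'

theorem IsLinkage.restrict (h : G.IsLinkage S t R C F) (hC : C' ⊆ C)
    (hinc : ∀ c ∈ C', ∀ e ∈ F' c, t ∈ G'.inc e ↔ t ∈ G.inc e)
    (hsub : ∀ c ∈ C', c ∈ F' c ∧ F' c ⊆ F c ∩ S')
    (hreach : ∀ c ∈ C', ∃ s ∈ R', G'.Reach (F' c) t s) : G'.IsLinkage S' t R' C' F' where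
  subset c hc := fun _ he => ((hsub c hc).2 he).2
  mem c hc := (hsub c hc).1
  incident c hc := (hinc c hc c (hsub c hc).1).2 (h.incident c (hC hc))
  eq_of_incident c hc e he ht :=
    h.eq_of_incident c (hC hc) e ((hsub c hc).2 he).1 ((hinc c hc e he).1 ht)
  reach := hreach
  pairwiseDisjoint c hc c' hc' hne :=
    (h.pairwiseDisjoint (hC hc) (hC hc') hne).mono (fun _ he => ((hsub c hc).2 he).1)
      fun _ he => ((hsub c' hc').2 he).1

theorem IsLinkage.mono (h : G.IsLinkage S t R C F) (hC : C' ⊆ C) (hS : ∀ c ∈ C', F c ⊆ S')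
    (hR : R ⊆ R') : G.IsLinkage S' t R' C' F :=
  h.restrict hC (fun _ _ _ _ => Iff.rfl)
    (fun c hc => ⟨h.mem c (hC hc), Set.subset_inter subset_rfl (hS c hc)⟩) fun c hc =>
      let ⟨s, hs, hreach⟩ := h.reach c (hC hc); ⟨s, hR hs, hreach⟩

theorem IsLinkage.congr_graph (h : G.IsLinkage S t R C F)
    (hinc : ∀ c ∈ C, ∀ e ∈ F c, G.inc e = G'.inc e) : G'.IsLinkage S t R C F :=
  h.restrict subset_rfl (fun c hc e he => by rw [hinc c hc e he])
    (fun c hc => ⟨h.mem c hc, Set.subset_inter subset_rfl (h.subset c hc)⟩) fun c hc =>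
      let ⟨s, hs, hreach⟩ := h.reach c hc; ⟨s, hs, hreach.congr (hinc c hc)⟩

open Classical in
theorem IsLinkage.update (h : G.IsLinkage S t R C F) (hg : g ∉ C) (hDS : D ⊆ S) (hgD : g ∈ D)
    (hgt : t ∈ G.inc g) (heq : ∀ e ∈ D, t ∈ G.inc e → e = g) (hreach : ∃ s ∈ R, G.Reach D t s)
    (hdisj : ∀ c ∈ C, Disjoint D (F c)) :
    G.IsLinkage S t R (insert g C) (Function.update F g D) := by
  have hself : Function.update F g D g = D := Function.update_self ..
  have hne : ∀ c ∈ C, Function.update F g D c = F c := fun c hc =>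
    Function.update_of_ne (ne_of_mem_of_not_mem hc hg) _ _
  refine ⟨?_, ?_, ?_, ?_, ?_, ?_⟩
  · exact Set.forall_mem_insert.2 ⟨by rwa [hself], fun c hc => hne c hc ▸ h.subset c hc⟩
  · exact Set.forall_mem_insert.2 ⟨by rwa [hself], fun c hc => hne c hc ▸ h.mem c hc⟩
  · exact Set.forall_mem_insert.2 ⟨hgt, h.incident⟩
  · exact Set.forall_mem_insert.2 ⟨by rwa [hself], fun c hc => hne c hc ▸ h.eq_of_incident c hc⟩
  · exact Set.forall_mem_insert.2 ⟨by rwa [hself], fun c hc => hne c hc ▸ h.reach c hc⟩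
  · refine (Set.pairwiseDisjoint_insert_of_notMem hg).2 ⟨fun c hc c' hc' hcc => ?_, fun c hc => ?_⟩
    · rw [Function.onFun_apply, hne c hc, hne c' hc']
      exact h.pairwiseDisjoint hc hc' hcc
    · rw [hself, hne c hc]; exact hdisj c hc

/-- Disjoint edge sets `I h` inside `X`, each joining `A` to the end in `X` of an edge
`h ∈ H`. -/
structure IsFan (G : Multigraph V E) (P : Set E) (A X : Set V) (H : Set E) (I : E → Set E) :
    Prop where
  subset : ∀ h ∈ H, I h ⊆ P ∩ G.inside X
  reach : ∀ h ∈ H, ∀ x ∈ X, x ∈ G.inc h → ∃ a ∈ A, G.Reach (I h) a x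
  pairwiseDisjoint : H.PairwiseDisjoint I

theorem IsFan.mono (h : G.IsFan P A X H I) (hP : P ⊆ P') (hH : H' ⊆ H) : G.IsFan P' A X H' I :=
  ⟨fun e he => (h.subset e (hH he)).trans (Set.inter_subset_inter_left _ hP),
    fun e he => h.reach e (hH he), h.pairwiseDisjoint.subset hH⟩

/-- A vertex set `X ∋ t` avoiding `R` is tight if all edges of `S` leaving `X` are used
simultaneously by disjoint `t`-`R`-paths that leave `X` once. The parts of the paths on either
side of the cut are recorded as two fans, whose edges lie in `P`. -/
structure IsTight (G : Multigraph V E) (S P : Set E) (t : V) (R X : Set V) : Prop where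
  mem : t ∈ X
  disjoint : Disjoint X R
  exists_inner : ∃ I, G.IsFan P {t} X (S ∩ G.cut X) I
  exists_outer : ∃ O, G.IsFan P R Xᶜ (S ∩ G.cut X) O

theorem IsTight.mono (h : G.IsTight S P t R X) (hP : P ⊆ P') : G.IsTight S P' t R X :=
  ⟨h.mem, h.disjoint, h.exists_inner.imp fun _ hI => hI.mono hP subset_rfl,
    h.exists_outer.imp fun _ hO => hO.mono hP subset_rfl⟩

/-- The dart list `l` is a trail from `t` to `R` with edges in `S` whose first edge is `c` and
which never returns to `t`. -/
structure IsTrail (G : Multigraph V E) (S : Set E) (t : V) (R : Set V) (c : E)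
    (l : List (E × V)) : Prop where
  edge_mem : ∀ d ∈ l, d.1 ∈ S
  head : ∃ x l', l = (c, x) :: l'
  walk : ∃ s ∈ R, G.IsDartWalk t l s
  ne : ∀ d ∈ l, d.2 ≠ t
  edges_nodup : (l.map Prod.fst).Nodup

/-- A linkage of `C` to `R` by edge-disjoint trails, the one through `c` being `p c`. -/
structure IsTrailSystem (G : Multigraph V E) (S : Set E) (t : V) (R : Set V) (C : Set E)
    (p : E → List (E × V)) : Prop where
  isTrail : ∀ c ∈ C, G.IsTrail S t R c (p c)
  disjoint : ∀ c ∈ C, ∀ c' ∈ C, ∀ d ∈ p c, ∀ d' ∈ p c', d.1 = d'.1 → c = c'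

theorem IsLinkage.exists_isTrailSystem (h : G.IsLinkage S t R C F) (ht : t ∉ R) :
    ∃ p, G.IsTrailSystem S t R C p ∧ ∀ c ∈ C, ∀ d ∈ p c, d.1 ∈ F c := by
  have htrail : ∀ c ∈ C, ∃ l, G.IsTrail S t R c l ∧ ∀ d ∈ l, d.1 ∈ F c := fun c hc => by
    obtain ⟨s, hs, hreach⟩ := h.reach c hc
    obtain ⟨x, l, hl, hlF, hnodup⟩ :=
      hreach.exists_nodup_cons (fun hts => ht (hts ▸ hs)) (h.eq_of_incident c hc)
    exact ⟨_, ⟨fun d hd => h.subset c hc (hlF d hd), ⟨x, l, rfl⟩, ⟨s, hs, hl⟩,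
      fun d hd hdt => (List.nodup_cons.1 hnodup).1 (hdt ▸ List.mem_map_of_mem hd),
      hl.edges_nodup hnodup⟩, hlF⟩
  choose! p hp hpF using htrail
  exact ⟨p, ⟨hp, fun c hc c' hc' d hd d' hd' hdd =>
    h.eq_of_mem hc hc' (hpF c hc d hd) (hdd ▸ hpF c' hc' d' hd')⟩, hpF⟩

theorem IsTrail.notMem_inc_of_mem_tail {c : E} {x : V} {l : List (E × V)}
    (h : G.IsTrail S t R c ((c, x) :: l)) : ∀ d ∈ l, t ∉ G.inc d.1 := fun d hd htd => by
  obtain ⟨s, -, hs⟩ := h.walk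
  rcases List.mem_cons.1 (hs.2.mem_support hd htd) with hx | hx
  · exact h.ne _ List.mem_cons_self hx.symm
  · obtain ⟨d', hd', hdt⟩ := List.mem_map.1 hx
    exact h.ne d' (List.mem_cons_of_mem _ hd') hdt

theorem IsTrail.append_of_append {c : E} {x : V} {l₁ l₂ q : List (E × V)}
    (h : G.IsTrail S t R c (l₁ ++ l₂)) (hne : l₁ ≠ []) (hl₁ : G.IsDartWalk t l₁ x)
    (hq : G.IsDartWalk x q s) (hs : s ∈ R) (hqS : ∀ d ∈ q, d.1 ∈ S) (hqt : ∀ d ∈ q, d.2 ≠ t)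
    (hnodup : (q.map Prod.fst).Nodup) (hdisj : ∀ d ∈ l₁, ∀ d' ∈ q, d.1 ≠ d'.1) :
    G.IsTrail S t R c (l₁ ++ q) where
  edge_mem := List.forall_mem_append.2 ⟨(List.forall_mem_append.1 h.edge_mem).1, hqS⟩
  head := by
    obtain ⟨d, l, rfl⟩ := List.exists_cons_of_ne_nil hne
    obtain ⟨y, l', hl'⟩ := h.head
    exact ⟨y, l ++ q, congrArg (· :: (l ++ q)) (List.cons.inj hl').1⟩
  walk := ⟨s, hs, isDartWalk_append.2 ⟨x, hl₁, hq⟩⟩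
  ne := List.forall_mem_append.2 ⟨(List.forall_mem_append.1 h.ne).1, hqt⟩
  edges_nodup := by
    have hnodup₁ := h.edges_nodup
    rw [List.map_append] at hnodup₁ ⊢
    refine List.nodup_append.2 ⟨(List.nodup_append.1 hnodup₁).1, hnodup, fun e he e' he' => ?_⟩
    obtain ⟨d, hd, rfl⟩ := List.mem_map.1 he
    obtain ⟨d', hd', rfl⟩ := List.mem_map.1 he'
    exact hdisj d hd d' hd'

namespace IsTrailSystem

variable {p : E → List (E × V)} (hp : G.IsTrailSystem S t R C p)

include hp

theorem isLinkage : G.IsLinkage S t R C fun c => {e | e ∈ (p c).map Prod.fst} := by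
  refine ⟨fun c hc e he => ?_, fun c hc => ?_, fun c hc => ?_, fun c hc e he hte => ?_,
    fun c hc => ?_, fun c hc c' hc' hne => ?_⟩
  · obtain ⟨d, hd, rfl⟩ := List.mem_map.1 he
    exact (hp.isTrail c hc).edge_mem d hd
  · obtain ⟨x, l, hl⟩ := (hp.isTrail c hc).head
    simp [hl]
  · obtain ⟨x, l, hl⟩ := (hp.isTrail c hc).head
    obtain ⟨s, -, hs⟩ := (hp.isTrail c hc).walk
    rw [hl] at hs
    exact Sym2.mem_iff_exists.2 ⟨x, hs.1⟩
  · obtain ⟨x, l, hl⟩ := (hp.isTrail c hc).head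
    obtain ⟨d, hd, rfl⟩ := List.mem_map.1 he
    rcases List.mem_cons.1 (hl ▸ hd) with rfl | hd
    exacts [rfl, absurd hte ((hl ▸ hp.isTrail c hc).notMem_inc_of_mem_tail d hd)]
  · obtain ⟨s, hs, hwalk⟩ := (hp.isTrail c hc).walk
    exact ⟨s, hs, hwalk.reach fun d hd => List.mem_map_of_mem hd⟩
  · refine Set.disjoint_left.2 fun e he he' => hne ?_
    obtain ⟨d, hd, rfl⟩ := List.mem_map.1 he
    obtain ⟨d', hd', hdd⟩ := List.mem_map.1 he'
    exact hp.disjoint c hc c' hc' d hd d' hd' hdd.symm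

/-- The edges of `S` on none of the trails `p c`. -/
def freeEdges (S C : Set E) (p : E → List (E × V)) : Set E :=
  {e | e ∈ S ∧ ∀ c ∈ C, ∀ d ∈ p c, d.1 ≠ e}

theorem exists_reroute {c : E} {l₁ l₂ q : List (E × V)} {x : V} (hc : c ∈ C)
    (hpc : p c = l₁ ++ l₂) (hne : l₁ ≠ []) (hl₁ : G.IsDartWalk t l₁ x) (hq : G.IsDartWalk x q s)
    (hs : s ∈ R) (hfree : ∀ d ∈ q, d.1 ∈ freeEdges S C p) (hqt : ∀ d ∈ q, d.2 ≠ t)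
    (hnodup : (q.map Prod.fst).Nodup) :
    ∃ p', G.IsTrailSystem S t R C p' ∧ (∀ c', ∀ d ∈ p' c', d ∈ p c' ∨ d ∈ q) ∧
      ∀ d ∈ l₂, d.1 ∈ freeEdges S C p' := by
  classical
  have hl₁p : ∀ d ∈ l₁, d ∈ p c := fun d hd => hpc ▸ List.mem_append_left l₂ hd
  have hl₂p : ∀ d ∈ l₂, d ∈ p c := fun d hd => hpc ▸ List.mem_append_right l₁ hd
  have hdisj : ∀ d ∈ l₁, ∀ d' ∈ q, d.1 ≠ d'.1 := fun d hd d' hd' =>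
    (hfree d' hd').2 c hc d (hl₁p d hd)
  have htrail : G.IsTrail S t R c (l₁ ++ q) := (hpc ▸ hp.isTrail c hc).append_of_append hne hl₁ hq
    hs (fun d hd => (hfree d hd).1) hqt hnodup hdisj
  have hl₁₂ : ∀ d ∈ l₁, ∀ d' ∈ l₂, d.1 ≠ d'.1 := fun d hd d' hd' => by
    have h := (hp.isTrail c hc).edges_nodup
    rw [hpc, List.map_append] at h
    exact (List.nodup_append.1 h).2.2 _ (List.mem_map_of_mem hd) _ (List.mem_map_of_mem hd')
  have hmem : ∀ c' d, d ∈ Function.update p c (l₁ ++ q) c' →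
      d ∈ p c' ∧ (d ∈ l₁ ∨ c' ≠ c) ∨ c' = c ∧ d ∈ q := fun c' d hd => by
    rcases eq_or_ne c' c with rfl | hne
    · rw [Function.update_self, List.mem_append] at hd
      exact hd.imp (fun h => ⟨hl₁p d h, Or.inl h⟩) (And.intro rfl)
    · exact Or.inl ⟨Function.update_of_ne hne _ p ▸ hd, Or.inr hne⟩
  refine ⟨Function.update p c (l₁ ++ q),
    ⟨fun c' hc' => ?_, fun c₁ h₁ c₂ h₂ d₁ hd₁ d₂ hd₂ hdd => ?_⟩,
    fun c' d hd => (hmem c' d hd).imp And.left And.right,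
    fun d hd => ⟨(hp.isTrail c hc).edge_mem d (hl₂p d hd), fun c' hc' d' hd' hdd => ?_⟩⟩
  · rcases eq_or_ne c' c with rfl | hne
    · rwa [Function.update_self]
    · rw [Function.update_of_ne hne]
      exact hp.isTrail c' hc'
  · rcases hmem c₁ d₁ hd₁ with ⟨hp₁, -⟩ | ⟨rfl, hq₁⟩ <;>
      rcases hmem c₂ d₂ hd₂ with ⟨hp₂, -⟩ | ⟨rfl, hq₂⟩
    · exact hp.disjoint c₁ h₁ c₂ h₂ d₁ hp₁ d₂ hp₂ hdd
    · exact absurd hdd ((hfree d₂ hq₂).2 c₁ h₁ d₁ hp₁)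
    · exact absurd hdd.symm ((hfree d₁ hq₁).2 c₂ h₂ d₂ hp₂)
    · rfl
  · rcases hmem c' d' hd' with ⟨hp', hl₁ | hne⟩ | ⟨-, hq'⟩
    · exact hl₁₂ d' hl₁ d hd hdd
    · exact hne (hp.disjoint c' hc' c hc d' hp' d (hl₂p d hd) hdd)
    · exact (hfree d' hq').2 c hc d (hl₂p d hd) hdd.symm

theorem exists_isLinkage_insert (ht : t ∉ R) (hs : s ∈ R)
    (hreach : G.Reach (freeEdges S C p) t s) :
    ∃ g ∈ S ∩ G.inci t, g ∉ C ∧ ∃ F, G.IsLinkage S t R (insert g C) F := by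
  obtain ⟨l, hl, hlK, hnodup⟩ := hreach.exists_nodup
  cases l with
  | nil => exact absurd (hl ▸ hs) ht
  | cons d l =>
    have hgt : t ∈ G.inc d.1 := by rw [hl.1]; exact Sym2.mem_mk_left _ _
    have hdK := hlK d List.mem_cons_self
    have hdC : d.1 ∉ C := fun hdC => by
      obtain ⟨x, l', hl'⟩ := (hp.isTrail _ hdC).head
      exact hdK.2 _ hdC (d.1, x) (hl' ▸ List.mem_cons_self) rfl
    have htl : ∀ d' ∈ l, t ∉ G.inc d'.1 := fun d' hd' htd =>
      (List.nodup_cons.1 hnodup).1 (hl.2.mem_support hd' htd)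
    refine ⟨d.1, ⟨hdK.1, hgt⟩, hdC, _, hp.isLinkage.update (D := {e | e ∈ (d :: l).map Prod.fst})
      hdC ?_ (by simp) hgt ?_ ⟨s, hs, hl.reach fun d' hd' => List.mem_map_of_mem hd'⟩ ?_⟩
    · intro e he
      obtain ⟨d', hd', rfl⟩ := List.mem_map.1 he
      exact (hlK d' hd').1
    · intro e he hte
      obtain ⟨d', hd', rfl⟩ := List.mem_map.1 he
      rcases List.mem_cons.1 hd' with rfl | hd'
      exacts [rfl, absurd hte (htl d' hd')]
    · refine fun c hc => Set.disjoint_left.2 fun e he hec => ?_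
      obtain ⟨d', hd', rfl⟩ := List.mem_map.1 he
      obtain ⟨d'', hd'', hdd⟩ := List.mem_map.1 hec
      exact (hlK d' hd').2 c hc d'' hd'' hdd

theorem exists_isLinkage_insert_of_residual {x : V} {r : List (E × V)} (ht : t ∉ R)
    (hr : G.IsDartWalk t r x) (hrS : ∀ d ∈ r, d.1 ∈ S ∧ ∀ c ∈ C, d ∉ p c)
    (hx : ∃ s ∈ R, G.Reach (freeEdges S C p) x s) :
    ∃ g ∈ S ∩ G.inci t, g ∉ C ∧ ∃ F, G.IsLinkage S t R (insert g C) F := by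
  induction hn : r.length using Nat.strong_induction_on generalizing r p x with
  | _ n ih =>
  set Z : Set V := {v | ∃ s ∈ R, G.Reach (freeEdges S C p) v s}
  by_cases htZ : t ∈ Z
  · obtain ⟨s, hs, hreach⟩ := htZ
    exact hp.exists_isLinkage_insert ht hs hreach
  -- Cut the residual trail where it first meets `Z`, by the reversal of a dart of some `p c`, and
  -- continue `p c` from there along free edges; this frees the rest of `p c`.
  obtain ⟨r₁, ⟨e, y⟩, r₂, v, rfl, hr₁, hinc, hv, ⟨s, hs, hy⟩, hr₁Z⟩ := hr.exists_first_mem htZ hx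
  obtain ⟨hr₁S, hr₂S⟩ := List.forall_mem_append.1 hrS
  obtain ⟨⟨heS, hep⟩, -⟩ := List.forall_mem_cons.1 hr₂S
  obtain ⟨c, hc, hec⟩ : ∃ c ∈ C, (e, v) ∈ p c := by
    have he : e ∉ freeEdges S C p := fun he =>
      hv ⟨s, hs, Reach.trans (Reach.single (F := freeEdges S C p) he hinc) hy⟩
    simp only [freeEdges, Set.mem_ofPred_eq, not_and, not_forall, ne_eq, not_not] at he
    obtain ⟨c, hc, ⟨e', z⟩, hd, rfl⟩ := he heS
    obtain ⟨s', -, hwalk⟩ := (hp.isTrail c hc).walk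
    rcases Sym2.mem_iff.1 (hinc ▸ hwalk.head_mem_inc hd) with rfl | rfl
    exacts [⟨c, hc, hd⟩, absurd hd (hep c hc)]
  obtain ⟨l₁, l₂, hpc⟩ := List.append_of_mem hec
  obtain ⟨s', hs', hwalk⟩ := (hp.isTrail c hc).walk
  obtain ⟨a, hl₁, hinc', hl₂⟩ := isDartWalk_append.1 (hpc ▸ hwalk)
  obtain rfl : a = y := Sym2.congr_left.1 (hinc'.symm.trans (hinc.trans Sym2.eq_swap))
  have hne : l₁ ≠ [] := by
    rintro rfl
    exact htZ ⟨s, hs, (show t = a from hl₁) ▸ hy⟩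
  obtain ⟨q, hq, hqK, hnodup⟩ := hy.exists_nodup
  have hqZ : ∀ d ∈ q, d.2 ∈ Z := fun d hd => by
    obtain ⟨q₁, q₂, rfl, -, hq₂⟩ :=
      hq.exists_append (List.mem_cons_of_mem _ (List.mem_map_of_mem hd))
    exact ⟨s, hs, hq₂.reach fun d' hd' => hqK d' (List.mem_append_right q₁ hd')⟩
  obtain ⟨p', hp', hp'p, hfree⟩ := hp.exists_reroute hc hpc hne hl₁ hq hs hqK
    (fun d hd hdt => htZ (hdt ▸ hqZ d hd)) (hq.edges_nodup hnodup)
  refine ih r₁.length (by simp [← hn]) hp' hr₁ (fun d hd => ⟨(hr₁S d hd).1, fun c' hc' hdp' => ?_⟩)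
    ⟨s', hs', hl₂.reach fun d hd => hfree d (List.mem_cons_of_mem _ hd)⟩ rfl
  rcases hp'p c' d hdp' with hdp | hdq
  exacts [(hr₁S d hd).2 c' hc' hdp, hr₁Z d hd (hqZ d hdq)]

/-- The darts along which the trails `p c` can be augmented: those with edges in `S` that are
not traversed in the same direction by any of the trails. -/
def residualDarts (S C : Set E) (p : E → List (E × V)) : Set (E × V) :=
  {d | d.1 ∈ S ∧ ∀ c ∈ C, d ∉ p c}

theorem notMem_of_notMem_residual {c : E} {d : E × V} {a : V} (hc : c ∈ C) (hd : d ∈ p c)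
    (hinc : G.inc d.1 = s(a, d.2)) (ha : ¬G.DartReach (residualDarts S C p) t a) :
    ¬G.DartReach (residualDarts S C p) t d.2 := fun hreach => by
  refine ha (hreach.tail ⟨d.1, ⟨(hp.isTrail c hc).edge_mem d hd, fun c' hc' hd' => ?_⟩,
    hinc.trans Sym2.eq_swap⟩)
  obtain rfl := hp.disjoint c hc c' hc' d hd _ hd' rfl
  have hda := List.inj_on_of_nodup_map (hp.isTrail c hc).edges_nodup hd hd' rfl
  exact ne_of_inc_eq hinc (congrArg Prod.snd hda).symm

theorem exists_crossing {h : E} {X : Set V} (hX : X = {v | G.DartReach (residualDarts S C p) t v})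
    (hh : h ∈ S ∩ G.cut X) :
    ∃ c ∈ C, ∃ a ∈ X, ∃ b ∉ X, ∃ l₁ l₂, G.inc h = s(a, b) ∧ p c = l₁ ++ (h, b) :: l₂ ∧
      G.IsDartWalk t l₁ a ∧ (∀ d ∈ l₁, d.1 ∈ G.inside X) ∧
      (∃ s ∈ R, G.IsDartWalk b l₂ s) ∧ ∀ d ∈ l₂, d.1 ∈ G.inside Xᶜ := by
  obtain ⟨hS, a, b, hab, ha, hb⟩ := hh
  obtain ⟨c, hc, hmem⟩ : ∃ c ∈ C, (h, b) ∈ p c := by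
    by_contra! hnot
    rw [hX] at ha hb
    exact hb (ha.tail ⟨h, ⟨hS, hnot⟩, hab⟩)
  obtain ⟨l₁, l₂, hpc⟩ := List.append_of_mem hmem
  obtain ⟨s, hs, hwalk⟩ := (hp.isTrail c hc).walk
  obtain ⟨v, hl₁, hinc, hl₂⟩ := isDartWalk_append.1 (hpc ▸ hwalk)
  obtain rfl : v = a := Sym2.congr_left.1 (hinc.symm.trans hab)
  have hleave : ∀ d ∈ p c, ∀ x, G.inc d.1 = s(x, d.2) → x ∉ X → d.2 ∉ X := by
    subst hX
    exact fun d hd x => hp.notMem_of_notMem_residual hc hd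
  rw [hpc] at hleave
  obtain ⟨hleave₁, hleave₂⟩ := List.forall_mem_append.1 hleave
  exact ⟨c, hc, v, ha, b, hb, l₁, l₂, hab, hpc, hl₁, hl₁.forall_mem hleave₁ ha, ⟨s, hs, hl₂⟩,
    (hl₂.forall_notMem (List.forall_mem_cons.1 hleave₂).2 hb).2⟩

theorem isFan_of_injOn {X : Set V} {c : E → E} {l : E → List (E × V)}
    (hP : ∀ c ∈ C, ∀ d ∈ p c, d.1 ∈ P) (hc : Set.MapsTo c H C) (hinj : Set.InjOn c H)
    (hl : ∀ h ∈ H, ∀ d ∈ l h, d ∈ p (c h)) (hin : ∀ h ∈ H, ∀ d ∈ l h, d.1 ∈ G.inside X)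
    (hreach : ∀ h ∈ H, ∀ x ∈ X, x ∈ G.inc h →
      ∃ a ∈ A, G.Reach {e | e ∈ (l h).map Prod.fst} a x) :
    G.IsFan P A X H fun h => {e | e ∈ (l h).map Prod.fst} := by
  refine ⟨fun h hh e he => ?_, hreach, fun h hh h' hh' hne => ?_⟩
  · obtain ⟨d, hd, rfl⟩ := List.mem_map.1 he
    exact ⟨hP _ (hc hh) d (hl h hh d hd), hin h hh d hd⟩
  · refine Set.disjoint_left.2 fun e he he' => hne ?_
    obtain ⟨d, hd, rfl⟩ := List.mem_map.1 he
    obtain ⟨d', hd', hdd⟩ := List.mem_map.1 he'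
    exact hinj hh hh' (hp.disjoint _ (hc hh) _ (hc hh') d (hl h hh d hd) d' (hl h' hh' d' hd')
      hdd.symm)

theorem isTight_residual {X : Set V} (hX : X = {v | G.DartReach (residualDarts S C p) t v})
    (hdisj : Disjoint X R) (hP : ∀ c ∈ C, ∀ d ∈ p c, d.1 ∈ P) : G.IsTight S P t R X := by
  have : Nonempty V := ⟨t⟩
  choose! c hc a ha b hb l₁ l₂ hab hpc hl₁ hin hl₂ hout using
    fun h => hp.exists_crossing (h := h) hX
  have hinj : Set.InjOn c (S ∩ G.cut X) := by
    intro h hh h' hh' hcc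
    have hmem' : (h', b h') ∈ l₁ h ++ (h, b h) :: l₂ h := by
      rw [← hpc h hh, hcc, hpc h' hh']; simp
    rcases List.mem_append.1 hmem' with hd | hd
    · exact absurd (hin h hh _ hd (b h') (by rw [hab h' hh']; simp)) (hb h' hh')
    · rcases List.mem_cons.1 hd with hd | hd
      · exact (congrArg Prod.fst hd).symm
      · exact absurd (ha h' hh') (hout h hh _ hd (a h') (by rw [hab h' hh']; simp))
  refine ⟨hX ▸ Relation.ReflTransGen.refl, hdisj, ⟨_, hp.isFan_of_injOn hP hc hinj
    (fun h hh d hd => by rw [hpc h hh]; simp [hd]) hin fun h hh x hx hxh => ?_⟩,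
    ⟨_, hp.isFan_of_injOn hP hc hinj (fun h hh d hd => by rw [hpc h hh]; simp [hd]) hout
      fun h hh x hx hxh => ?_⟩⟩
  · rw [hab h hh, Sym2.mem_iff] at hxh
    obtain rfl : x = a h := hxh.resolve_right fun hxb => hb h hh (hxb ▸ hx)
    exact ⟨t, rfl, (hl₁ h hh).reach fun d hd => List.mem_map_of_mem hd⟩
  · rw [hab h hh, Sym2.mem_iff] at hxh
    obtain rfl : x = b h := hxh.resolve_left fun hxa => hx (hxa ▸ ha h hh)
    obtain ⟨s, hs, hwalk⟩ := hl₂ h hh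
    exact ⟨s, hs, (hwalk.reach fun d hd => List.mem_map_of_mem hd).symm⟩

end IsTrailSystem

theorem IsLinkage.exists_insert_or_isTight (h : G.IsLinkage S t R C F) (ht : t ∉ R) :
    (∃ g ∈ S ∩ G.inci t, g ∉ C ∧ ∃ F', G.IsLinkage S t R (insert g C) F') ∨
      ∃ X, G.IsTight S (⋃ c ∈ C, F c) t R X := by
  obtain ⟨p, hp, hpF⟩ := h.exists_isTrailSystem ht
  by_cases hR : Disjoint {v | G.DartReach (IsTrailSystem.residualDarts S C p) t v} R
  · exact Or.inr ⟨_, hp.isTight_residual rfl hR fun c hc d hd => Set.mem_biUnion hc (hpF c hc d hd)⟩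
  · obtain ⟨s, hreach, hs⟩ := Set.not_disjoint_iff.1 hR
    obtain ⟨r, hr, hrD, -⟩ := DartReach.exists_nodup hreach
    exact Or.inl (hp.exists_isLinkage_insert_of_residual ht hr hrD ⟨s, hs, Reach.refl⟩)

theorem IsLinkage.linkable_or_exists_isTight {T : Set V} (h : G.IsLinkage S t (T \ {t}) C F)
    (hC : C ⊆ S ∩ G.inci t) (hfin : ((S ∩ G.inci t) \ C).Finite) :
    G.Linkable S T t ∨ ∃ X, G.IsTight S S t (T \ {t}) X := by
  induction hn : ((S ∩ G.inci t) \ C).ncard using Nat.strong_induction_on generalizing C F with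
  | _ n ih =>
  rcases h.exists_insert_or_isTight fun ht => ht.2 rfl with ⟨g, hg, hgC, F', hF'⟩ | ⟨X, hX⟩
  · have hlt : ((S ∩ G.inci t) \ insert g C) ⊂ ((S ∩ G.inci t) \ C) :=
      ⟨Set.sdiff_subset_sdiff_right (Set.subset_insert _ _),
        fun hsub => (hsub ⟨hg, hgC⟩).2 (Set.mem_insert _ _)⟩
    exact ih _ (hn ▸ Set.ncard_lt_ncard hlt hfin) hF' (Set.insert_subset hg hC)
      (hfin.subset hlt.subset) rfl
  · exact Or.inr ⟨X, hX.mono (Set.iUnion₂_subset h.subset)⟩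

/-- The edges with at least one end in `X`. -/
def touch (G : Multigraph V E) (X : Set V) : Set E := {e | ∃ v ∈ G.inc e, v ∈ X}

theorem disjoint_touch_inside_compl : Disjoint (G.touch X) (G.inside Xᶜ) :=
  Set.disjoint_left.2 fun _ ⟨v, hv, hvX⟩ he => he v hv hvX

theorem touch_mono {Y : Set V} (h : X ⊆ Y) : G.touch X ⊆ G.touch Y :=
  fun _ ⟨v, hv, hvX⟩ => ⟨v, hv, h hvX⟩

theorem Reach.exists_notMem_touch {F : Set E} {u w : V} (h : G.Reach F u w) (hu : u ∈ X)
    (hw : w ∉ X) : ∃ y ∈ Xᶜ, G.Reach (F ∩ G.touch X) u y := by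
  obtain ⟨e, he, x, y, hinc, hx, hy, hreach⟩ := h.exists_cut_edge hu hw
  refine ⟨y, hy, Reach.trans (hreach.mono fun f hf => ⟨hf.1, ?_⟩)
    (Reach.single (F := F ∩ G.touch X) ⟨he, x, hinc ▸ Sym2.mem_mk_left x y, hx⟩ hinc)⟩
  obtain ⟨v, hv⟩ : ∃ v, v ∈ G.inc f := ⟨_, Sym2.out_fst_mem _⟩
  exact ⟨v, hv, hf.2 v hv⟩

theorem IsLinkage.inter_touch (h : G.IsLinkage S t R C F) (ht : t ∈ X) (hX : Disjoint X R) :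
    G.IsLinkage (S ∩ G.touch X) t Xᶜ C fun c => F c ∩ G.touch X :=
  h.restrict subset_rfl (fun _ _ _ _ => Iff.rfl)
    (fun c hc => ⟨⟨h.mem c hc, t, h.incident c hc, ht⟩, fun _ he =>
      ⟨he.1, h.subset c hc he.1, he.2⟩⟩) fun c hc =>
    let ⟨_, hs, hreach⟩ := h.reach c hc
    hreach.exists_notMem_touch ht (Set.disjoint_right.1 hX hs)

theorem IsLinkage.attach (h : G.IsLinkage S t R' C F) (hIS : ∀ e ∈ H, I e ⊆ S)
    (hIt : ∀ e ∈ H, ∀ f ∈ I e, t ∉ G.inc f) (hI : H.PairwiseDisjoint I)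
    (hFI : ∀ c ∈ C, ∀ e ∈ H, Disjoint (F c) (I e))
    (hreach : ∀ c ∈ C, ∃ s ∈ R, G.Reach (F c ∪ ⋃ e ∈ F c ∩ H, I e) t s) :
    G.IsLinkage S t R C fun c => F c ∪ ⋃ e ∈ F c ∩ H, I e where
  subset c hc := Set.union_subset (h.subset c hc) (Set.iUnion₂_subset fun e he => hIS e he.2)
  mem c hc := Or.inl (h.mem c hc)
  incident := h.incident
  eq_of_incident c hc f hf hft := by
    rcases hf with hf | hf
    · exact h.eq_of_incident c hc f hf hft
    · obtain ⟨e, he, hf⟩ := Set.mem_iUnion₂.1 hf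
      exact absurd hft (hIt e he.2 f hf)
  reach := hreach
  pairwiseDisjoint c hc c' hc' hne := by
    have hFF := h.pairwiseDisjoint hc hc' hne
    refine Set.disjoint_union_left.2 ⟨Set.disjoint_union_right.2 ⟨hFF, ?_⟩,
      Set.disjoint_union_right.2 ⟨?_, ?_⟩⟩
    · exact Set.disjoint_iUnion₂_right.2 fun e he => hFI c hc e he.2
    · exact Set.disjoint_iUnion₂_left.2 fun e he => (hFI c' hc' e he.2).symm
    · refine Set.disjoint_iUnion₂_left.2 fun e he => Set.disjoint_iUnion₂_right.2 fun e' he' => ?_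
      exact hI he.2 he'.2 fun hee => Set.disjoint_left.1 hFF he.1 (hee ▸ he'.1)

theorem IsTight.exists_isLinkage (hX : G.IsTight S S t R X)
    (h : G.IsLinkage (S ∩ G.touch X) t Xᶜ C F) : ∃ F', G.IsLinkage S t R C F' := by
  obtain ⟨O, hO⟩ := hX.exists_outer
  have hOinside : ∀ e ∈ S ∩ G.cut X, O e ⊆ G.inside Xᶜ := fun e he => (hO.subset e he).trans
    Set.inter_subset_right
  have hFS := h.mono subset_rfl (fun c hc => (h.subset c hc).trans Set.inter_subset_left) subset_rfl
  refine ⟨_, hFS.attach (fun e he => (hO.subset e he).trans Set.inter_subset_left)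
    (fun e he f hf hft => hOinside e he hf t hft hX.mem) hO.pairwiseDisjoint
    (fun c hc e he => disjoint_touch_inside_compl.mono
      ((h.subset c hc).trans Set.inter_subset_right) (hOinside e he)) fun c hc => ?_⟩
  obtain ⟨y, hy, hty⟩ := h.reach c hc
  obtain ⟨e, he, a, b, hinc, ha, hb, hta⟩ := hty.exists_cut_edge hX.mem hy
  have heX : e ∈ S ∩ G.cut X := ⟨(h.subset c hc he).1, a, b, hinc, ha, hb⟩
  obtain ⟨s, hs, hsb⟩ := hO.reach e heX b hb (hinc ▸ Sym2.mem_mk_right a b)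
  have htb : G.Reach (F c) t b :=
    Reach.trans (hta.mono Set.inter_subset_left) (Reach.single he hinc)
  exact ⟨s, hs, (htb.mono Set.subset_union_left).trans
    (hsb.symm.mono (Set.subset_union_of_subset_right
      (Set.subset_biUnion_of_mem (u := O) (show e ∈ F c ∩ (S ∩ G.cut X) from ⟨he, heX⟩)) _))⟩

/-- If the tight set of `t` meets a set `B ∌ t` fanned from `t' ∉ A`, it suffices to link the
edges of `C` to the outside of `A \ B`: a path entering `B` inside `A` continues along the fan
towards `t'`, and hence leaves `A`. -/
theorem IsTight.exists_isLinkage_of_isFan {A B : Set V} {t' : V} (hA : G.IsTight S S t R A)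
    (htB : t ∉ B) (ht'A : t' ∉ A) (h : G.IsLinkage (S ∩ G.touch (A \ B)) t (A \ B)ᶜ C F)
    (hI : G.IsFan S {t'} B ((⋃ c ∈ C, F c) ∩ G.cut B) I) : ∃ F', G.IsLinkage S t R C F' := by
  have hFA := h.mono subset_rfl (fun c hc => (h.subset c hc).trans
    (Set.inter_subset_inter_right _ (touch_mono Set.sdiff_subset))) subset_rfl
  refine hA.exists_isLinkage (hFA.attach (H := (⋃ c ∈ C, F c) ∩ G.cut B)
    (I := fun e => I e ∩ G.touch A)
    (fun e he => Set.inter_subset_inter_left _ ((hI.subset e he).trans Set.inter_subset_left))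
    (fun e he f hf hft => htB ((hI.subset e he hf.1).2 t hft))
    (hI.pairwiseDisjoint.mono fun e => Set.inter_subset_left)
    (fun c hc e he => Set.disjoint_left.2 fun f hf hf' => ?_) fun c hc => ?_)
  · obtain ⟨v, hv, hvA⟩ := (h.subset c hc hf).2
    exact hvA.2 ((hI.subset e he hf'.1).2 v hv)
  · obtain ⟨y, hy, hty⟩ := h.reach c hc
    obtain ⟨e, he, a, b, hinc, ha, hb, hta⟩ := hty.exists_cut_edge (X := A \ B) ⟨hA.mem, htB⟩ hy
    have htb : G.Reach (F c) t b :=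
      Reach.trans (hta.mono Set.inter_subset_left) (Reach.single he hinc)
    by_cases hbA : b ∈ A
    · have hbB : b ∈ B := by_contra fun hbB => hb ⟨hbA, hbB⟩
      have heB : e ∈ (⋃ c ∈ C, F c) ∩ G.cut B :=
        ⟨Set.mem_biUnion hc he, b, a, hinc.trans Sym2.eq_swap, hbB, ha.2⟩
      obtain ⟨_, rfl, ht'b⟩ := hI.reach e heB b hbB (hinc ▸ Sym2.mem_mk_right a b)
      obtain ⟨x, hx, hbx⟩ := ht'b.symm.exists_notMem_touch hbA ht'A
      exact ⟨x, hx, (htb.mono Set.subset_union_left).trans (hbx.mono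
        (Set.subset_union_of_subset_right
          (Set.subset_biUnion_of_mem (u := fun e => I e ∩ G.touch A)
            (show e ∈ F c ∩ ((⋃ c ∈ C, F c) ∩ G.cut B) from ⟨he, heB⟩)) _))⟩
    · exact ⟨b, hbA, htb.mono Set.subset_union_left⟩

end Linkages

section InnerEulerian

variable {S C : Set E} {T R R' Y : Set V} {t : V} {F : E → Set E} {N L M : ℕ → Set E} {g : E}
  {p : E → List (E × V)} {a : ℕ → E} {y : ℕ → V}

/-- The spanning subgraph with edge set `S` is inner Eulerian w.r.t. `T`: every finite cut
with no terminal on one side is even. -/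
def InnerEulerian (G : Multigraph V E) (S : Set E) (T : Set V) : Prop :=
  ∀ Y ⊆ Tᶜ, (S ∩ G.cut Y).Finite → Even (S ∩ G.cut Y).ncard

theorem IsLinkage.attach_seq (h : G.IsLinkage S t R' C F) (ha : a.Injective) (hNS : ∀ n, N n ⊆ S)
    (hNt : ∀ n, ∀ e ∈ N n, t ∉ G.inc e) (hN : Pairwise (Function.onFun Disjoint N))
    (hFN : ∀ c ∈ C, ∀ n, Disjoint (F c) (N n))
    (hreach : ∀ n, ∃ s ∈ R, G.Reach (F (a n) ∪ N n) t s)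
    (hR : ∀ c ∈ C, c ∉ Set.range a → ∃ s ∈ R, G.Reach (F c) t s) :
    ∃ F', G.IsLinkage S t R C F' := by
  have hext : ∀ n, Function.extend a N F (a n) = N n := ha.extend_apply N F
  refine ⟨_, h.attach (H := Set.range a) (I := Function.extend a N F)
    ?_ ?_ ?_ ?_ fun c hc => ?_⟩
  · rintro _ ⟨n, rfl⟩
    exact hext n ▸ hNS n
  · rintro _ ⟨n, rfl⟩
    exact hext n ▸ hNt n
  · rintro _ ⟨n, rfl⟩ _ ⟨m, rfl⟩ hne
    rw [Function.onFun_apply, hext, hext]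
    exact hN fun hnm => hne (congrArg a hnm)
  · rintro c hc _ ⟨n, rfl⟩
    exact hext n ▸ hFN c hc n
  · by_cases hca : c ∈ Set.range a
    · obtain ⟨n, rfl⟩ := hca
      obtain ⟨s, hs, hts⟩ := hreach n
      refine ⟨s, hs, hts.mono (Set.union_subset_union_right _ ?_)⟩
      rw [← hext n]
      exact Set.subset_biUnion_of_mem (u := Function.extend a N F)
        (show a n ∈ F (a n) ∩ Set.range a from ⟨h.mem _ hc, n, rfl⟩)
    · obtain ⟨s, hs, hts⟩ := hR c hc hca
      exact ⟨s, hs, hts.mono Set.subset_union_left⟩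

section Tails

variable {b : ℕ → E} (h : G.IsLinkage S t R' C F) (hbC : ∀ n, b n ∈ C)
  (hL : ∀ n, L n ⊆ F (b n) \ {b n})

include h hbC hL

theorem IsLinkage.eq_of_mem_tail {c e : E} {n : ℕ} (hc : c ∈ C) (he : e ∈ L n) (hec : e ∈ F c) :
    c = b n :=
  h.eq_of_mem hc (hbC n) hec (hL n he).1

theorem IsLinkage.sdiff_tails : G.IsLinkage S t Set.univ C fun c => F c \ ⋃ n, L n := by
  refine h.restrict subset_rfl (fun _ _ _ _ => Iff.rfl)
    (fun c hc => ⟨⟨h.mem c hc, fun hcL => ?_⟩, fun e he => ⟨he.1, h.subset c hc he.1⟩⟩)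
    fun c _ => ⟨t, Set.mem_univ t, Reach.refl⟩
  obtain ⟨n, hn⟩ := Set.mem_iUnion.1 hcL
  exact (hL n hn).2 (h.eq_of_mem_tail hbC hL hc hn (h.mem c hc))

theorem IsLinkage.sdiff_tails_apply (hb : b.Injective) (n : ℕ) :
    F (b n) \ ⋃ n, L n = F (b n) \ L n := by
  refine (Set.sdiff_subset_sdiff_right (Set.subset_iUnion L n)).antisymm fun e he =>
    ⟨he.1, fun heL => ?_⟩
  obtain ⟨m, hm⟩ := Set.mem_iUnion.1 heL
  obtain rfl : n = m := hb (h.eq_of_mem_tail hbC hL (hbC n) hm he.1)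
  exact he.2 hm

theorem IsLinkage.sdiff_tails_of_notMem_range {c : E} (hc : c ∈ C) (hcb : c ∉ Set.range b) :
    F c \ ⋃ n, L n = F c := by
  refine sdiff_eq_left.2 (Set.disjoint_left.2 fun e he heL => hcb ?_)
  obtain ⟨n, hn⟩ := Set.mem_iUnion.1 heL
  exact ⟨n, (h.eq_of_mem_tail hbC hL hc hn he).symm⟩

end Tails

/-- Hilbert's hotel for linkages: the tail `L n` of the path of `a (n + 1)` is handed over to
`a n`, which reaches it through the connecting edges `M n`. -/
theorem IsLinkage.shift (h : G.IsLinkage S t R' C F) (ha : a.Injective) (haC : ∀ n, a n ∈ C)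
    (hL : ∀ n, L n ⊆ F (a (n + 1)) \ {a (n + 1)}) (hMS : ∀ n, M n ⊆ S \ ⋃ c ∈ C, F c)
    (hMt : ∀ n, ∀ e ∈ M n, t ∉ G.inc e) (hM : Pairwise (Function.onFun Disjoint M))
    (hzero : G.Reach (F (a 0)) t (y 0))
    (hsucc : ∀ n, G.Reach (F (a (n + 1)) \ L n) t (y (n + 1)))
    (hMr : ∀ n, G.Reach (M n) (y n) (y (n + 1)))
    (hLr : ∀ n, ∃ s ∈ R, G.Reach (L n) (y (n + 1)) s)
    (hR : ∀ c ∈ C, c ∉ Set.range a → ∃ s ∈ R, G.Reach (F c) t s) :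
    ∃ F', G.IsLinkage S t R C F' := by
  have hsC : ∀ n, a (n + 1) ∈ C := fun n => haC (n + 1)
  have hinj : Function.Injective fun n => a (n + 1) := ha.comp (add_left_injective 1)
  have hM_of_mem : ∀ n, ∀ c ∈ C, ∀ e ∈ M n, e ∉ F c := fun n c hc e he hec =>
    (hMS n he).2 (Set.mem_biUnion hc hec)
  refine (h.sdiff_tails hsC hL).attach_seq ha (N := fun n => M n ∪ L n)
    (fun n => Set.union_subset ((hMS n).trans Set.sdiff_subset)
      ((hL n).trans (Set.sdiff_subset.trans (h.subset _ (hsC n))))) ?_ ?_ ?_ ?_ fun c hc hca => ?_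
  · rintro n e (he | he) hte
    exacts [hMt n e he hte, (hL n he).2 (h.eq_of_incident _ (hsC n) e (hL n he).1 hte)]
  · intro n m hnm
    refine Set.disjoint_left.2 ?_
    rintro e (he | he) (he' | he')
    · exact Set.disjoint_left.1 (hM hnm) he he'
    · exact hM_of_mem n _ (hsC m) e he (hL m he').1
    · exact hM_of_mem m _ (hsC n) e he' (hL n he).1
    · exact hnm (hinj (h.eq_of_mem_tail hsC hL (hsC n) he' (hL n he).1))
  · refine fun c hc n => Set.disjoint_left.2 ?_
    rintro e he (he' | he')
    exacts [hM_of_mem n c hc e he' he.1, he.2 (Set.mem_iUnion.2 ⟨n, he'⟩)]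
  · intro n
    obtain ⟨s, hs, hys⟩ := hLr n
    have hty : G.Reach (F (a n) \ ⋃ n, L n) t (y n) := by
      cases n with
      | zero =>
        rwa [h.sdiff_tails_of_notMem_range hsC hL (haC 0) fun ⟨m, hm⟩ => absurd (ha hm) (by simp)]
      | succ n => exact (h.sdiff_tails_apply hsC hL hinj n).symm ▸ hsucc n
    exact ⟨s, hs, (hty.mono Set.subset_union_left).trans
      (((hMr n).mono (fun e he => Or.inr (Or.inl he))).trans
        (hys.mono fun e he => Or.inr (Or.inr he)))⟩
  · rw [h.sdiff_tails_of_notMem_range hsC hL hc fun ⟨m, hm⟩ => hca ⟨m + 1, hm⟩]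
    exact hR c hc hca

theorem IsTrail.exists_tail {c : E} {l : List (E × V)} {d : E × V} {y : V}
    (h : G.IsTrail S t R c l) (hd : d ∈ l) (hy : y ∈ G.inc d.1) (hyt : y ≠ t) :
    ∃ L ⊆ {e | e ∈ l.map Prod.fst} \ {c}, G.Reach ({e | e ∈ l.map Prod.fst} \ L) t y ∧
      ∃ s ∈ R, G.Reach L y s := by
  obtain ⟨s, hs, hwalk⟩ := h.walk
  obtain ⟨l₁, l₂, rfl, hl₁, hl₂⟩ := hwalk.exists_append (hwalk.mem_support hd hy)
  have hnodup := h.edges_nodup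
  rw [List.map_append] at hnodup
  have hdisj := (List.nodup_append.1 hnodup).2.2
  have hc : c ∈ l₁.map Prod.fst := by
    obtain ⟨x, l', hl'⟩ := h.head
    cases l₁ with
    | nil => exact absurd hl₁.symm hyt
    | cons d' l₁ =>
      rw [List.cons_append, List.cons.injEq] at hl'
      simp [hl'.1]
  refine ⟨{e | e ∈ l₂.map Prod.fst}, fun e he => ⟨?_, ?_⟩, ?_, s, hs,
    hl₂.reach fun d hd => List.mem_map_of_mem hd⟩
  · rw [Set.mem_ofPred_eq, List.map_append]
    exact List.mem_append_right _ he
  · rintro rfl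
    exact hdisj _ hc _ he rfl
  · refine hl₁.reach fun d hd => ⟨?_, fun hd' => hdisj _ (List.mem_map_of_mem hd) _ hd' rfl⟩
    rw [Set.mem_ofPred_eq, List.map_append]
    exact List.mem_append_left _ (List.mem_map_of_mem hd)

namespace IsTrailSystem

variable (hp : G.IsTrailSystem S t R C p)

include hp

theorem even_ncard_biUnion_cut {B : Finset E} (hB : ↑B ⊆ C) (htY : t ∉ Y) (hYR : Disjoint Y R) :
    Even (⋃ c ∈ B, {e | e ∈ (p c).map Prod.fst} ∩ G.cut Y).ncard := by
  have hcut := Set.Finite.ncard_biUnion B.finite_toSet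
    (s := fun c => {e | e ∈ (p c).map Prod.fst} ∩ G.cut Y)
    (fun c _ => (List.finite_toSet _).inter_of_left _)
    ((hp.isLinkage.pairwiseDisjoint.subset hB).mono fun c => Set.inter_subset_left)
  rw [finsum_mem_coe_finset] at hcut
  refine hcut ▸ Finset.even_sum _ fun c hc => ?_
  obtain ⟨s, hs, hwalk⟩ := (hp.isTrail c (hB hc)).walk
  exact (hwalk.even_ncard_cut (hp.isTrail c (hB hc)).edges_nodup Y).2
    ⟨fun h => absurd h htY, fun h => absurd hs (Set.disjoint_left.1 hYR h)⟩

/-- The trails in `B` and the given trail `q` contribute an odd number of edges to the cut of `Y`,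
so they are not all of it. -/
theorem exists_mem_inc_of_notMem {y : V} {q : List (E × V)} {B : Finset E}
    (hE : (S ∩ G.cut Y).Finite → Even (S ∩ G.cut Y).ncard) (htY : t ∉ Y) (hYR : Disjoint Y R)
    (hB : ↑B ⊆ C) (hq : G.IsDartWalk t q y) (hnodup : (q.map Prod.fst).Nodup)
    (hqK : ∀ d ∈ q, d.1 ∈ freeEdges S C p) (hy : y ∈ Y)
    (hY : ∀ e ∈ freeEdges S C p, e ∈ G.cut Y → e ∈ q.map Prod.fst) :
    ∃ c ∈ C, c ∉ B ∧ ∃ d ∈ p c, ∃ v ∈ G.inc d.1, v ∈ Y := by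
  by_contra! hno
  set Q := {e | e ∈ q.map Prod.fst} ∩ G.cut Y
  set U := ⋃ c ∈ B, {e | e ∈ (p c).map Prod.fst} ∩ G.cut Y
  have hcut : S ∩ G.cut Y = Q ∪ U := by
    ext e
    constructor
    · rintro ⟨heS, heY⟩
      by_cases heK : e ∈ freeEdges S C p
      · exact Or.inl ⟨hY e heK heY, heY⟩
      · obtain ⟨c, hc, d, hd, rfl⟩ : ∃ c ∈ C, ∃ d ∈ p c, d.1 = e := by
          by_contra! h
          exact heK ⟨heS, h⟩
        have hcB : c ∈ B := by
          by_contra hcB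
          obtain ⟨a, b, hinc, ha, -⟩ := heY
          exact hno c hc hcB d hd a (hinc ▸ Sym2.mem_mk_left a b) ha
        exact Or.inr (Set.mem_biUnion hcB ⟨List.mem_map_of_mem hd, heY⟩)
    · rintro (⟨he, heY⟩ | he)
      · obtain ⟨d, hd, rfl⟩ := List.mem_map.1 he
        exact ⟨(hqK d hd).1, heY⟩
      · obtain ⟨c, hc, he, heY⟩ := Set.mem_iUnion₂.1 he
        exact ⟨hp.isLinkage.subset c (hB hc) he, heY⟩
  have hdisj : Disjoint Q U := Set.disjoint_left.2 fun e he heU => by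
    obtain ⟨c, hc, he', -⟩ := Set.mem_iUnion₂.1 heU
    obtain ⟨d, hd, rfl⟩ := List.mem_map.1 he.1
    obtain ⟨d', hd', hdd⟩ := List.mem_map.1 he'
    exact (hqK d hd).2 c (hB hc) d' hd' hdd
  have hQfin : Q.Finite := (List.finite_toSet _).inter_of_left _
  have hUfin : U.Finite := B.finite_toSet.biUnion fun c _ => (List.finite_toSet _).inter_of_left _
  have hQ : ¬Even Q.ncard := fun h =>
    htY (((hq.even_ncard_cut hnodup Y).1 h).2 hy)
  have hEven := hE (hcut ▸ hQfin.union hUfin)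
  rw [hcut, Set.ncard_union_eq hdisj hQfin hUfin, Nat.even_add] at hEven
  exact hQ (hEven.2 (hp.even_ncard_biUnion_cut hB htY hYR))

end IsTrailSystem

/-- A trail of free edges from `t` containing all free edges at `t`, together with a finite set
`used` of trails of the system which it has met. -/
structure AlternatingTrail (G : Multigraph V E) (S : Set E) (t : V) (C : Set E)
    (p : E → List (E × V)) where
  darts : List (E × V)
  tip : V
  used : Finset E
  walk : G.IsDartWalk t darts tip
  edges_nodup : (darts.map Prod.fst).Nodup
  free : ∀ d ∈ darts, d.1 ∈ IsTrailSystem.freeEdges S C p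
  mem_of_incident : ∀ e ∈ IsTrailSystem.freeEdges S C p, t ∈ G.inc e → e ∈ darts.map Prod.fst
  tip_ne : tip ≠ t
  used_subset : ↑used ⊆ C

namespace AlternatingTrail

/-- `q'` prolongs `q` by the free darts `r` up to a vertex on the new trail `p c`. -/
structure Extends (q q' : G.AlternatingTrail S t C p) (r : List (E × V)) (c : E) : Prop where
  darts_eq : q'.darts = q.darts ++ r
  walk : G.IsDartWalk q.tip r q'.tip
  mem : c ∈ C
  notMem_used : c ∉ q.used
  used_subset : q.used ⊆ q'.used
  mem_used : c ∈ q'.used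
  tip_mem : ∃ d ∈ p c, q'.tip ∈ G.inc d.1

theorem exists_extends (hp : G.IsTrailSystem S t (T \ {t}) C p) (hE : G.InnerEulerian S T)
    (hno : ∀ s ∈ T \ {t}, ¬G.Reach (IsTrailSystem.freeEdges S C p) t s)
    (q : G.AlternatingTrail S t C p) : ∃ q' r c, q.Extends q' r c := by
  classical
  set K := IsTrailSystem.freeEdges S C p
  set Q := {e | e ∈ q.darts.map Prod.fst}
  set Y : Set V := {v | G.Reach (K \ Q) q.tip v}
  have htY : t ∉ Y := fun h => by
    obtain ⟨e, he, v, hinc, -⟩ := (show G.Reach _ _ _ from h).symm.exists_first_edge q.tip_ne.symm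
    exact he.2 (q.mem_of_incident e he.1 (hinc ▸ Sym2.mem_mk_left t v))
  have hYT : Y ⊆ Tᶜ := fun v hv hvT => hno v ⟨hvT, fun h => htY (h ▸ hv)⟩
    ((q.walk.reach q.free).trans (Reach.mono Set.sdiff_subset hv))
  obtain ⟨c, hc, hcB, d, hd, y, hyd, hyY⟩ := hp.exists_mem_inc_of_notMem (hE Y hYT) htY
    (Set.disjoint_left.2 fun v hv hvT => hYT hv hvT.1) q.used_subset
    q.walk q.edges_nodup q.free Reach.refl fun e heK heY => by
      by_contra heQ
      obtain ⟨a, b, hinc, ha, hb⟩ := heY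
      exact hb (Reach.trans ha (Reach.single (F := K \ Q) ⟨heK, heQ⟩ hinc))
  obtain ⟨r, hr, hrK, hrnodup⟩ := Reach.exists_nodup hyY
  refine ⟨⟨q.darts ++ r, y, insert c q.used, isDartWalk_append.2 ⟨_, q.walk, hr⟩, ?_,
    List.forall_mem_append.2 ⟨q.free, fun d hd => (hrK d hd).1⟩, fun e he hte => ?_,
    fun h => htY (h ▸ hyY), ?_⟩, r, c, rfl, hr, hc, hcB, Finset.subset_insert _ _,
    Finset.mem_insert_self _ _, d, hd, hyd⟩
  · rw [List.map_append]
    refine List.nodup_append.2 ⟨q.edges_nodup, hr.edges_nodup hrnodup, fun e he e' he' hee => ?_⟩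
    obtain ⟨d, hd, rfl⟩ := List.mem_map.1 he'
    exact (hrK d hd).2 (hee ▸ he)
  · rw [List.map_append]
    exact List.mem_append_left _ (q.mem_of_incident e he hte)
  · rw [Finset.coe_insert]
    exact Set.insert_subset hc q.used_subset

theorem Extends.notMem_darts {q q' : G.AlternatingTrail S t C p} {r : List (E × V)} {c e : E}
    (h : q.Extends q' r c) (he : e ∈ r.map Prod.fst) : e ∉ q.darts.map Prod.fst := by
  have hnodup := q'.edges_nodup
  rw [h.darts_eq, List.map_append] at hnodup
  exact fun he' => (List.nodup_append.1 hnodup).2.2 e he' e he rfl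

theorem Extends.mem_freeEdges {q q' : G.AlternatingTrail S t C p} {r : List (E × V)} {c e : E}
    (h : q.Extends q' r c) (he : e ∈ r.map Prod.fst) : e ∈ IsTrailSystem.freeEdges S C p := by
  obtain ⟨d, hd, rfl⟩ := List.mem_map.1 he
  exact q'.free d (h.darts_eq ▸ List.mem_append_right _ hd)

theorem Extends.notMem_inc {q q' : G.AlternatingTrail S t C p} {r : List (E × V)} {c e : E}
    (h : q.Extends q' r c) (he : e ∈ r.map Prod.fst) : t ∉ G.inc e := fun hte =>
  h.notMem_darts he (q.mem_of_incident e (h.mem_freeEdges he) hte)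

section Sequence

variable {σ : ℕ → G.AlternatingTrail S t C p} {r : ℕ → List (E × V)}
  (h : ∀ n, (σ n).Extends (σ (n + 1)) (r n) (a n))

include h

theorem injective_of_extends : a.Injective := by
  have hmono : Monotone fun n => (σ n).used := monotone_nat_of_le_succ fun n => (h n).used_subset
  exact Function.Injective.of_lt_imp_ne fun i j hij heq =>
    (h j).notMem_used (heq ▸ hmono (Nat.succ_le_of_lt hij) (h i).mem_used)

theorem pairwise_disjoint_of_extends :
    Pairwise (Function.onFun Disjoint fun n => {e | e ∈ (r n).map Prod.fst}) := by
  have hmono : Monotone fun n => {e | e ∈ (σ n).darts.map Prod.fst} :=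
    monotone_nat_of_le_succ fun n e he => by
      rw [Set.mem_ofPred_eq, (h n).darts_eq, List.map_append]
      exact List.mem_append_left _ he
  refine (pairwise_disjoint_on _).2 fun i j hij => Set.disjoint_left.2 fun e hi hj =>
    (h j).notMem_darts hj (hmono (Nat.succ_le_of_lt hij) ?_)
  rw [Set.mem_ofPred_eq, (h i).darts_eq, List.map_append]
  exact List.mem_append_right _ hi

end Sequence

end AlternatingTrail

open Classical in
theorem IsLinkage.update_singleton (h : G.IsLinkage S t R C F) (hgC : g ∉ C) (hgS : g ∈ S)
    (hgt : t ∈ G.inc g) : G.IsLinkage S t Set.univ (insert g C) (Function.update F g {g}) :=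
  (h.mono subset_rfl h.subset (Set.subset_univ _)).update hgC (Set.singleton_subset_iff.2 hgS) rfl
    hgt (fun _ he _ => he) ⟨t, trivial, Reach.refl⟩ fun c hc => Set.disjoint_singleton_left.2
      fun hg => hgC (h.eq_of_incident c hc g hg hgt ▸ hc)

/-- An alternating trail that never gets stuck meets infinitely many trails of the system, and the
tails of these can be shifted along it. -/
theorem IsTrailSystem.exists_isLinkage_of_extends (hp : G.IsTrailSystem S t R C p) (hgC : g ∉ C)
    (hgS : g ∈ S) (hgt : t ∈ G.inc g) {σ : ℕ → G.AlternatingTrail S t C p} {r : ℕ → List (E × V)}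
    (h : ∀ n, (σ n).Extends (σ (n + 1)) (r n) (a n)) (hzero : G.Reach {g} t (σ 0).tip) :
    ∃ F, G.IsLinkage S t R (insert g C) F := by
  classical
  set W : E → Set E := fun c => {e | e ∈ (p c).map Prod.fst}
  have hW : ∀ c ∈ C, Function.update W g {g} c = W c := fun c hc =>
    Function.update_of_ne (ne_of_mem_of_not_mem hc hgC) _ _
  choose d hd hdtip using fun n => (h n).tip_mem
  choose L hLsub hL hLr using fun n =>
    (hp.isTrail (a n) (h n).mem).exists_tail (hd n) (hdtip n) (σ (n + 1)).tip_ne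
  refine (hp.isLinkage.update_singleton hgC hgS hgt).shift (a := fun n => Nat.casesOn n g a)
    (L := L) (y := fun n => (σ n).tip) (M := fun n => {e | e ∈ (r n).map Prod.fst}) ?_ ?_
    (fun n => ?_) ?_
    (fun n e he => (h n).notMem_inc he) (AlternatingTrail.pairwise_disjoint_of_extends h) ?_
    (fun n => ?_) (fun n => (h n).walk.reach fun d hd => List.mem_map_of_mem hd) hLr
    fun c hc hca => ?_
  · rintro (_ | n) (_ | m) hnm
    exacts [rfl, absurd (h m).mem ((show g = a m from hnm) ▸ hgC),
      absurd (h n).mem ((show a n = g from hnm).symm ▸ hgC),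
      congrArg _ (AlternatingTrail.injective_of_extends h hnm)]
  · rintro (_ | n)
    exacts [Set.mem_insert _ _, Set.mem_insert_of_mem _ (h n).mem]
  · exact hW _ (h n).mem ▸ hLsub n
  · intro n e he
    refine ⟨((h n).mem_freeEdges he).1, fun heW => ?_⟩
    obtain ⟨c, rfl | hc, hec⟩ := Set.mem_iUnion₂.1 heW
    · rw [Function.update_self] at hec
      exact (h n).notMem_inc he (hec ▸ hgt)
    · rw [hW c hc] at hec
      obtain ⟨d, hd, hde⟩ := List.mem_map.1 hec
      exact ((h n).mem_freeEdges he).2 c hc d hd hde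
  · exact (Function.update_self g {g} W).symm ▸ hzero
  · exact hW _ (h n).mem ▸ hL n
  · obtain rfl | hc := hc
    · exact absurd ⟨0, rfl⟩ hca
    · exact hW c hc ▸ hp.isLinkage.reach c hc

namespace IsTrailSystem

variable (hp : G.IsTrailSystem S t (T \ {t}) ((S ∩ G.inci t) \ {g}) p)

include hp

theorem eq_of_mem_freeEdges {e : E} (he : e ∈ freeEdges S ((S ∩ G.inci t) \ {g}) p)
    (hte : t ∈ G.inc e) : e = g := by
  by_contra hne
  have heC : e ∈ (S ∩ G.inci t) \ {g} := ⟨⟨he.1, hte⟩, hne⟩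
  obtain ⟨d, hd, hde⟩ := List.mem_map.1 (hp.isLinkage.mem e heC)
  exact he.2 e heC d hd hde

theorem mem_freeEdges (hgS : g ∈ S) (hgt : t ∈ G.inc g) :
    g ∈ freeEdges S ((S ∩ G.inci t) \ {g}) p :=
  ⟨hgS, fun c hc _ hd hdg => hc.2
    (hp.isLinkage.eq_of_incident c hc g (hdg ▸ List.mem_map_of_mem hd) hgt).symm⟩

end IsTrailSystem

theorem IsLinkage.linkable_of_innerEulerian (hE : G.InnerEulerian S T) (hgS : g ∈ S)
    (hgt : t ∈ G.inc g) (h : G.IsLinkage S t (T \ {t}) ((S ∩ G.inci t) \ {g}) F) :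
    G.Linkable S T t := by
  obtain ⟨p, hp, -⟩ := h.exists_isTrailSystem fun h => h.2 rfl
  suffices ∃ F', G.IsLinkage S t (T \ {t}) (insert g ((S ∩ G.inci t) \ {g})) F' by
    rwa [Set.insert_sdiff_singleton, Set.insert_eq_of_mem (show g ∈ S ∩ G.inci t from ⟨hgS, hgt⟩)]
      at this
  by_cases hreach : ∃ s ∈ T \ {t}, G.Reach (IsTrailSystem.freeEdges S ((S ∩ G.inci t) \ {g}) p) t s
  · refine ⟨_, hp.isLinkage.update (fun hg => hg.2 rfl) (fun e he => he.1)
      (hp.mem_freeEdges hgS hgt) hgt (fun e he hte => hp.eq_of_mem_freeEdges he hte) hreach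
      fun c hc => Set.disjoint_left.2 fun e he hec => ?_⟩
    obtain ⟨d, hd, hde⟩ := List.mem_map.1 hec
    exact he.2 c hc d hd hde
  · push Not at hreach
    obtain ⟨y, hyt, hinc⟩ := exists_inc_eq_of_mem hgt
    choose next r c hext using AlternatingTrail.exists_extends hp hE hreach
    let start : G.AlternatingTrail S t ((S ∩ G.inci t) \ {g}) p :=
      { darts := [(g, y)], tip := y, used := ∅, walk := ⟨hinc, rfl⟩,
        edges_nodup := List.nodup_singleton g,
        free := List.forall_mem_singleton.2 (hp.mem_freeEdges hgS hgt),
        mem_of_incident := fun e he hte =>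
          List.mem_singleton.2 (hp.eq_of_mem_freeEdges he hte),
        tip_ne := hyt, used_subset := by simp }
    exact hp.exists_isLinkage_of_extends (fun hg => hg.2 rfl) hgS hgt (σ := fun n => next^[n] start)
      (fun n => Function.iterate_succ_apply' next n start ▸ hext _) (Reach.single rfl hinc)

end InnerEulerian

section EssentialEdges

variable {S C : Set E} {T R R' : Set V} {t t' t'' z : V} {e c : E} {F Φ : E → Set E}

theorem sdiff_singleton_inter_inci (h : t ∉ G.inc e) : (S \ {e}) ∩ G.inci t = S ∩ G.inci t :=
  Set.ext fun _ => ⟨fun hf => ⟨hf.1.1, hf.2⟩, fun hf => ⟨⟨hf.1, fun hfe => h (hfe ▸ hf.2)⟩, hf.2⟩⟩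

theorem notMem_inc_of_mem_sdiff (hinc : G.inc e = s(t, z)) (hz : z ∉ T) (ht' : t' ∈ T \ {t}) :
    t' ∉ G.inc e := fun h => by
  rw [hinc, Sym2.mem_iff] at h
  exact h.elim ht'.2 fun hz' => hz (hz' ▸ ht'.1)

theorem IsLinkage.sdiff_singleton (h : G.IsLinkage S t R C F) (he : t ∉ G.inc e) (hc : c ∈ C)
    (hec : e ∈ F c) (hreach : ∃ s ∈ R', G.Reach (F c \ {e}) t s) (hR : R ⊆ R') :
    G.IsLinkage (S \ {e}) t R' C fun c => F c \ {e} := by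
  refine h.restrict subset_rfl (fun _ _ _ _ => Iff.rfl)
    (fun c hc => ⟨⟨h.mem c hc, fun hce => he (hce ▸ h.incident c hc)⟩,
      fun f hf => ⟨hf.1, h.subset c hc hf.1, hf.2⟩⟩) fun c' hc' => ?_
  obtain rfl | hne := eq_or_ne c' c
  · exact hreach
  · obtain ⟨s, hs, hts⟩ := h.reach c' hc'
    exact ⟨s, hR hs, hts.mono (Set.subset_sdiff_singleton subset_rfl fun hec' =>
      hne (h.eq_of_mem hc' hc hec' hec))⟩

theorem IsLinkage.biUnion_sdiff_subset (h : G.IsLinkage S t R C F) (hc : c ∈ C) (hec : e ∈ F c) :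
    ⋃ c' ∈ C \ {c}, F c' ⊆ S \ {e} :=
  Set.iUnion₂_subset fun c' hc' => Set.subset_sdiff_singleton (h.subset c' hc'.1) fun hec' =>
    hc'.2 (h.eq_of_mem hc'.1 hc hec' hec)

variable (hΦ : G.IsLinkage S t' (T \ {t'}) (S ∩ G.inci t') Φ) (het' : t' ∉ G.inc e)
  (hn : ¬G.Linkable (S \ {e}) T t')

include hΦ het' hn

theorem IsLinkage.exists_mem_of_not_linkable : ∃ c ∈ S ∩ G.inci t', e ∈ Φ c := by
  by_contra! hno
  refine hn ⟨Φ, ?_⟩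
  rw [sdiff_singleton_inter_inci het']
  exact hΦ.mono subset_rfl (fun c hc => Set.subset_sdiff_singleton (hΦ.subset c hc) (hno c hc))
    subset_rfl

variable (hc : c ∈ S ∩ G.inci t') (hec : e ∈ Φ c)

include hc hec

theorem IsLinkage.reach_of_not_linkable (ht : t ∈ T \ {t'}) (hinc : G.inc e = s(t, z)) :
    G.Reach (Φ c \ {e}) t' z := by
  have hno : ∀ s ∈ T \ {t'}, ¬G.Reach (Φ c \ {e}) t' s := fun s hs hreach => hn ⟨_,
    sdiff_singleton_inter_inci (S := S) het' ▸
      hΦ.sdiff_singleton het' hc hec ⟨s, hs, hreach⟩ subset_rfl⟩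
  obtain ⟨s, hs, hreach⟩ := hΦ.reach c hc
  rcases hreach.avoid_edge hinc with h | h | h
  exacts [absurd h (hno s hs), absurd h (hno t ht), h]

theorem IsLinkage.exists_isTight_of_not_linkable :
    ∃ X, G.IsTight (S \ {e}) (⋃ c' ∈ (S ∩ G.inci t') \ {c}, Φ c') t' (T \ {t'}) X ∧
      ∀ v, G.Reach (Φ c \ {e}) t' v → v ∈ X := by
  have hδ := sdiff_singleton_inter_inci (S := S) het'
  have hdel : G.IsLinkage (S \ {e}) t' (T \ {t'}) ((S ∩ G.inci t') \ {c}) Φ :=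
    hΦ.mono Set.sdiff_subset (fun c' hc' => (Set.subset_biUnion_of_mem hc').trans
      (hΦ.biUnion_sdiff_subset hc hec)) subset_rfl
  rcases hdel.exists_insert_or_isTight fun h => h.2 rfl with ⟨g, hg, hgC, F', hF'⟩ | ⟨X, hX⟩
  · rw [hδ] at hg
    obtain rfl : g = c := by_contra fun hgc => hgC ⟨hg, hgc⟩
    rw [Set.insert_sdiff_singleton, Set.insert_eq_of_mem hg] at hF'
    exact absurd ⟨F', hδ.symm ▸ hF'⟩ hn
  · refine ⟨X, hX, fun v hv => by_contra fun hvX => hn ?_⟩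
    have hout := hΦ.sdiff_singleton (R' := Xᶜ) het' hc hec ⟨v, hvX, hv⟩
      hX.disjoint.subset_compl_left
    obtain ⟨F', hF'⟩ := (hX.mono (hΦ.biUnion_sdiff_subset hc hec)).exists_isLinkage
      (hout.inter_touch hX.mem disjoint_compl_right)
    exact ⟨F', hδ.symm ▸ hF'⟩

omit hΦ het' hn hc hec

theorem Linkable.sdiff_singleton_or (ht : t ∈ T) (hz : z ∉ T) (hinc : G.inc e = s(t, z))
    (ht' : t' ∈ T \ {t}) (ht'' : t'' ∈ T \ {t}) (hne : t' ≠ t'') (hL' : G.Linkable S T t')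
    (hL'' : G.Linkable S T t'') : G.Linkable (S \ {e}) T t' ∨ G.Linkable (S \ {e}) T t'' := by
  by_contra! ⟨hn', hn''⟩
  have hnotMem := fun x => notMem_inc_of_mem_sdiff (t' := x) hinc hz
  obtain ⟨Φ, hΦ⟩ := hL'
  obtain ⟨Ψ, hΨ⟩ := hL''
  obtain ⟨c, hc, hec⟩ := hΦ.exists_mem_of_not_linkable (hnotMem t' ht') hn'
  obtain ⟨c', hc', hec'⟩ := hΨ.exists_mem_of_not_linkable (hnotMem t'' ht'') hn''
  obtain ⟨X, hX, -⟩ := hΦ.exists_isTight_of_not_linkable (hnotMem t' ht') hn' hc hec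
  obtain ⟨Y, hY, hYreach⟩ := hΨ.exists_isTight_of_not_linkable (hnotMem t'' ht'') hn'' hc' hec'
  have hzY : z ∈ Y := hYreach z
    (hΨ.reach_of_not_linkable (hnotMem t'' ht'') hn'' hc' hec' ⟨ht, Ne.symm ht''.2⟩ hinc)
  have he : e ∉ G.touch (X \ Y) := by
    rintro ⟨v, hv, hvX, hvY⟩
    rw [hinc, Sym2.mem_iff] at hv
    rcases hv with rfl | rfl
    · exact hX.disjoint.notMem_of_mem_left hvX ⟨ht, Ne.symm ht'.2⟩
    · exact hvY hzY
  have ht'Y : t' ∉ Y := hY.disjoint.notMem_of_mem_right ⟨ht'.1, hne⟩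
  have hlink : G.IsLinkage ((S \ {e}) ∩ G.touch (X \ Y)) t' (X \ Y)ᶜ (S ∩ G.inci t')
      fun c => Φ c ∩ G.touch (X \ Y) :=
    (hΦ.inter_touch (X := X \ Y) ⟨hX.mem, ht'Y⟩
      (hX.disjoint.mono_left Set.sdiff_subset)).mono subset_rfl
      (fun c hc f hf => ⟨⟨hΦ.subset c hc hf.1, fun hfe => he (hfe ▸ hf.2)⟩, hf.2⟩) subset_rfl
  obtain ⟨I, hI⟩ := hY.exists_inner
  obtain ⟨F', hF'⟩ := (hX.mono (hΦ.biUnion_sdiff_subset hc hec)).exists_isLinkage_of_isFan ht'Y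
    (hX.disjoint.notMem_of_mem_right ⟨ht''.1, hne.symm⟩) hlink
    (hI.mono (hΨ.biUnion_sdiff_subset hc' hec') (Set.inter_subset_inter_left _
      (Set.iUnion₂_subset fun c hc => (hlink.subset c hc).trans Set.inter_subset_left)))
  exact hn' ⟨F', by rwa [sdiff_singleton_inter_inci (hnotMem t' ht')]⟩

end EssentialEdges

section SplittingOff

variable {S P H A B C : Set E} {T R X : Set V} {t t' x z w : V} {c e f g : E} {F I : E → Set E}

theorem IsFan.congr_graph (h : G.IsFan P R X H I) (hP : ∀ e ∈ P, G.inc e = G'.inc e)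
    (hH : ∀ e ∈ H, G.inc e = G'.inc e) : G'.IsFan P R X H I where
  subset e he _ hg := ⟨(h.subset e he hg).1, fun v hv =>
    (h.subset e he hg).2 v (hP _ (h.subset e he hg).1 ▸ hv)⟩
  reach e he x hx hxe :=
    let ⟨a, ha, hreach⟩ := h.reach e he x hx (hH e he ▸ hxe)
    ⟨a, ha, hreach.congr fun _ hg => hP _ (h.subset e he hg).1⟩
  pairwiseDisjoint := h.pairwiseDisjoint

/-- The edges `e = tz` and `f = zw` of `S` can be split off at the nonterminal `z`, that is,
replaced by a single edge from the terminal `t` to `w`. -/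
structure IsSplitPair (G : Multigraph V E) (S : Set E) (T : Set V) (t : V) (e : E) (z : V)
    (f : E) (w : V) : Prop where
  terminal : t ∈ T
  notMem : z ∉ T
  mem_left : e ∈ S
  mem_right : f ∈ S
  ne : f ≠ e
  inc_left : G.inc e = s(t, z)
  inc_right : G.inc f = s(z, w)
  end_ne : w ≠ t

open Classical in
/-- The graph after splitting off a pair of edges: `e` becomes an edge from `t` to `w`. The edge
`f` still exists and has to be removed from the edge set under consideration. -/
noncomputable def IsSplitPair.split (h : G.IsSplitPair S T t e z f w) : Multigraph V E where
  inc := Function.update G.inc e s(t, w)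
  not_isDiag g := by
    obtain rfl | hg := eq_or_ne g e
    · rw [Function.update_self]
      exact h.end_ne.symm
    · rw [Function.update_of_ne hg]
      exact G.not_isDiag g

theorem even_ncard_iff_of_even_symmDiff (hA : A.Finite) (hB : B.Finite)
    (h : Even (symmDiff A B).ncard) : Even A.ncard ↔ Even B.ncard := by
  rw [Set.symmDiff_def, Set.ncard_union_eq disjoint_sdiff_sdiff hA.sdiff hB.sdiff] at h
  have hA' := Set.ncard_inter_add_ncard_sdiff_eq_ncard A B hA
  have hB' := Set.ncard_inter_add_ncard_sdiff_eq_ncard B A hB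
  rw [Set.inter_comm] at hB'
  rw [Nat.even_iff] at h
  rw [Nat.even_iff, Nat.even_iff]
  omega

namespace IsSplitPair

variable (h : G.IsSplitPair S T t e z f w)

include h

open Classical in
theorem inc_split_self : h.split.inc e = s(t, w) :=
  Function.update_self (β := fun _ => Sym2 V) e s(t, w) G.inc

open Classical in
theorem inc_split_of_ne (hg : g ≠ e) : h.split.inc g = G.inc g := Function.update_of_ne hg ..

theorem mem_inter_inci : e ∈ S ∩ G.inci t :=
  ⟨h.mem_left, show t ∈ G.inc e from h.inc_left ▸ Sym2.mem_mk_left t z⟩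

theorem mem_cut_split_of_ne (hg : g ≠ e) : g ∈ h.split.cut X ↔ g ∈ G.cut X := by
  simp only [cut, Set.mem_ofPred_eq, h.inc_split_of_ne hg]

theorem eq_of_mem_inc_left (hx : x ∈ T) (hxe : x ∈ G.inc e) : x = t := by
  rw [h.inc_left, Sym2.mem_iff] at hxe
  exact hxe.resolve_right fun hxz => h.notMem (hxz ▸ hx)

theorem eq_of_mem_inc_right (hx : x ∈ T) (hxf : x ∈ G.inc f) : x = w := by
  rw [h.inc_right, Sym2.mem_iff] at hxf
  exact hxf.resolve_left fun hxz => h.notMem (hxz ▸ hx)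

theorem mem_inc_split (hx : x ∈ T) (hxg : x ∈ G.inc g) : x ∈ h.split.inc g := by
  obtain rfl | hg := eq_or_ne g e
  · rw [h.inc_split_self, h.eq_of_mem_inc_left hx hxg]
    exact Sym2.mem_mk_left t w
  · rwa [h.inc_split_of_ne hg]

theorem mem_inc_split_iff (hx : x ∈ T) (hxw : x ≠ w) : x ∈ h.split.inc g ↔ x ∈ G.inc g := by
  refine ⟨fun hxg => ?_, h.mem_inc_split hx⟩
  obtain rfl | hg := eq_or_ne g e
  · rw [h.inc_split_self, Sym2.mem_iff, or_iff_left hxw] at hxg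
    rw [hxg, h.inc_left]
    exact Sym2.mem_mk_left t z
  · rwa [h.inc_split_of_ne hg] at hxg

theorem inter_inci_split (hx : x ∈ T) (hxw : x ≠ w) :
    (S \ {f}) ∩ h.split.inci x = S ∩ G.inci x := by
  have hxf : x ∉ G.inc f := fun hxf => hxw (h.eq_of_mem_inc_right hx hxf)
  rw [← sdiff_singleton_inter_inci hxf]
  exact Set.ext fun g => and_congr_right' (h.mem_inc_split_iff hx hxw)

theorem inter_inci_split_end (hw : w ∈ T) :
    (S \ {f}) ∩ h.split.inci w = insert e ((S ∩ G.inci w) \ {f}) := by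
  have hwe : w ∉ G.inc e := fun hwe => h.end_ne (h.eq_of_mem_inc_left hw hwe)
  ext g
  obtain rfl | hg := eq_or_ne g e
  · simp [inci, h.inc_split_self, h.mem_left, h.ne.symm]
  · simp only [inci, Set.mem_inter_iff, Set.mem_sdiff, Set.mem_ofPred_eq, h.inc_split_of_ne hg,
      Set.mem_insert_iff, hg, false_or]
    tauto

theorem mem_symmDiff_cut_split (ht : t ∉ X) :
    g ∈ symmDiff (S ∩ G.cut X) ((S \ {f}) ∩ h.split.cut X) ↔
      (g = e ∨ g = f) ∧ ¬(z ∈ X ↔ w ∈ X) := by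
  rw [Set.mem_symmDiff]
  obtain rfl | hge := eq_or_ne g e
  · simp only [Set.mem_inter_iff, Set.mem_sdiff, Set.mem_singleton_iff, h.mem_left, h.ne.symm,
      mem_cut_iff h.inc_left, mem_cut_iff h.inc_split_self, ht]
    tauto
  obtain rfl | hgf := eq_or_ne g f
  · simp [h.mem_right, mem_cut_iff h.inc_right]
  · simp only [Set.mem_inter_iff, Set.mem_sdiff, Set.mem_singleton_iff,
      h.mem_cut_split_of_ne hge, hge, hgf]
    tauto

theorem innerEulerian_split (hE : G.InnerEulerian S T) : h.split.InnerEulerian (S \ {f}) T := by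
  intro Y hY hfin
  have hdiff : ∀ g, g ∈ symmDiff (S ∩ G.cut Y) ((S \ {f}) ∩ h.split.cut Y) ↔
      (g = e ∨ g = f) ∧ ¬(z ∈ Y ↔ w ∈ Y) := fun g =>
    h.mem_symmDiff_cut_split fun ht => hY ht h.terminal
  have hfin' : (S ∩ G.cut Y).Finite := by
    refine ((Set.toFinite {e, f}).union hfin).subset fun g hg => ?_
    by_contra hgB
    exact hgB (Or.inl ((hdiff g).1 (Or.inl ⟨hg, fun hg' => hgB (Or.inr hg')⟩)).1)
  refine (even_ncard_iff_of_even_symmDiff hfin' hfin ?_).1 (hE Y hY hfin')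
  by_cases hzw : z ∈ Y ↔ w ∈ Y
  · rw [Set.eq_empty_of_forall_notMem fun g hg => ((hdiff g).1 hg).2 hzw, Set.ncard_empty]
    exact Even.zero
  · have heq : symmDiff (S ∩ G.cut Y) ((S \ {f}) ∩ h.split.cut Y) = {e, f} :=
      Set.ext fun g => (hdiff g).trans (and_iff_left hzw)
    rw [heq, Set.ncard_pair h.ne.symm]
    exact even_two

theorem isLinkage_split (hF : G.IsLinkage S x R C F) (he : ∀ c ∈ C, e ∉ F c)
    (hf : ∀ c ∈ C, f ∉ F c) : h.split.IsLinkage (S \ {f}) x R C F :=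
  (hF.mono subset_rfl (fun c hc => Set.subset_sdiff_singleton (hF.subset c hc) (hf c hc))
    subset_rfl).congr_graph fun c hc _ hg =>
      (h.inc_split_of_ne (ne_of_mem_of_not_mem hg (he c hc))).symm

theorem reach_split {u v : V} (hr : G.Reach ((P \ {e}) \ {f}) u v) :
    h.split.Reach (P \ {f}) u v :=
  (hr.congr fun _ hg => (h.inc_split_of_ne hg.1.2).symm).mono fun _ hg => ⟨hg.1.1, hg.2⟩

theorem isLinkage_split_of_mem (hx : x ∈ T) (hxw : x ≠ w) (hF : G.IsLinkage S x R C F)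
    (hc : c ∈ C) (hec : e ∈ F c) (hfc : f ∈ F c)
    (hreach : ∃ s ∈ R, h.split.Reach (F c \ {f}) x s) :
    h.split.IsLinkage (S \ {f}) x R C fun c => F c \ {f} := by
  refine hF.restrict subset_rfl (fun _ _ _ _ => h.mem_inc_split_iff hx hxw)
    (fun c hc => ⟨⟨hF.mem c hc, fun hcf => hxw (h.eq_of_mem_inc_right hx
      (hcf ▸ hF.incident c hc))⟩, fun g hg => ⟨hg.1, hF.subset c hc hg.1, hg.2⟩⟩) fun c' hc' => ?_
  obtain rfl | hne := eq_or_ne c' c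
  · exact hreach
  · obtain ⟨s, hs, hr⟩ := hF.reach c' hc'
    refine ⟨s, hs, h.reach_split (hr.mono fun g hg => ⟨⟨hg, ?_⟩, ?_⟩)⟩
    · rintro rfl; exact hne (hF.eq_of_mem hc' hc hg hec)
    · rintro rfl; exact hne (hF.eq_of_mem hc' hc hg hfc)

theorem linkable_split_end (hw : w ∈ T) (hF : G.IsLinkage S w (T \ {w}) ((S ∩ G.inci w) \ {f}) F)
    (he : ∀ c ∈ (S ∩ G.inci w) \ {f}, e ∉ F c) (hf : ∀ c ∈ (S ∩ G.inci w) \ {f}, f ∉ F c) :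
    h.split.Linkable (S \ {f}) T w := by
  have hwe : w ∈ h.split.inc e := h.inc_split_self ▸ Sym2.mem_mk_right t w
  rw [Linkable, h.inter_inci_split_end hw]
  exact ⟨_, (h.isLinkage_split hF he hf).update (D := {e}) (fun hec => he e hec (hF.mem e hec))
    (Set.singleton_subset_iff.2 ⟨h.mem_left, h.ne.symm⟩) rfl hwe (fun g hg _ => hg)
    ⟨t, ⟨h.terminal, h.end_ne.symm⟩, Reach.single rfl (h.inc_split_self.trans Sym2.eq_swap)⟩
    fun c hc => Set.disjoint_singleton_left.2 (he c hc)⟩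

theorem linkable_split_of_sdiff_singleton (hE : G.InnerEulerian S T) (hx : x ∈ T) (hxt : x ≠ t)
    (hL : G.Linkable (S \ {e}) T x) : h.split.Linkable (S \ {f}) T x := by
  obtain ⟨F, hF⟩ := hL
  rw [sdiff_singleton_inter_inci fun hxe => hxt (h.eq_of_mem_inc_left hx hxe)] at hF
  have he : ∀ c ∈ S ∩ G.inci x, e ∉ F c := fun c hc hec => (hF.subset c hc hec).2 rfl
  have hFS : ∀ C ⊆ S ∩ G.inci x, G.IsLinkage S x (T \ {x}) C F := fun C hC =>
    hF.mono hC (fun c hc => (hF.subset c (hC hc)).trans Set.sdiff_subset) subset_rfl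
  obtain rfl | hxw := eq_or_ne x w
  · refine h.linkable_split_end hx (hFS _ Set.sdiff_subset) (fun c hc => he c hc.1)
      fun c hc hfc => hc.2 ?_
    exact (hF.eq_of_incident c hc.1 f hfc (h.inc_right ▸ Sym2.mem_mk_right z x)).symm
  have hδ := h.inter_inci_split hx hxw
  by_cases hf : ∃ c ∈ S ∩ G.inci x, f ∈ F c
  · obtain ⟨c, hc, hfc⟩ := hf
    have hcδ : c ∈ (S \ {f}) ∩ h.split.inci x := hδ ▸ hc
    refine IsLinkage.linkable_of_innerEulerian (F := F) (h.innerEulerian_split hE) hcδ.1 hcδ.2 ?_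
    rw [hδ]
    exact h.isLinkage_split (hFS _ Set.sdiff_subset) (fun c' hc' => he c' hc'.1)
      fun c' hc' hfc' => hc'.2 (hF.eq_of_mem hc'.1 hc hfc' hfc)
  · exact ⟨F, hδ ▸ h.isLinkage_split (hFS _ subset_rfl) he (by simpa using hf)⟩

theorem not_linkable_split (hx : x ∈ T) (hxt : x ≠ t) (hxw : x ≠ w)
    (hn : ¬G.Linkable (S \ {e}) T x) : ¬h.split.Linkable ((S \ {f}) \ {e}) T x := by
  rintro ⟨F, hF⟩
  rw [sdiff_singleton_inter_inci fun hxe => hxt (h.eq_of_mem_inc_left hx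
    ((h.mem_inc_split_iff hx hxw).1 hxe)), h.inter_inci_split hx hxw] at hF
  refine hn ⟨F, ?_⟩
  rw [sdiff_singleton_inter_inci fun hxe => hxt (h.eq_of_mem_inc_left hx hxe)]
  exact (hF.congr_graph fun c hc g hg => h.inc_split_of_ne (hF.subset c hc hg).2).mono subset_rfl
    (fun c hc g hg => ⟨(hF.subset c hc hg).1.1, (hF.subset c hc hg).2⟩) subset_rfl

theorem linkable_split_or_exists_isTight (hF : G.IsLinkage S t (T \ {t}) (S ∩ G.inci t) F) :
    h.split.Linkable (S \ {f}) T t ∨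
      ∃ A, h.split.IsTight (S \ {f}) (S \ {f}) t (T \ {t}) A := by
  have hδ := h.inter_inci_split h.terminal h.end_ne.symm
  have hsub : (S ∩ G.inci t) \ ({e} ∪ {c | f ∈ F c}) ⊆ S ∩ G.inci t := Set.sdiff_subset
  have hC := h.isLinkage_split (hF.mono hsub (fun c hc => hF.subset c (hsub hc)) subset_rfl)
    (fun c hc hec => hc.2 (Or.inl (hF.eq_of_mem hc.1 h.mem_inter_inci hec
      (hF.mem e h.mem_inter_inci))))
    fun c hc hfc => hc.2 (Or.inr hfc)
  refine hC.linkable_or_exists_isTight (hδ ▸ hsub) ?_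
  have hf : ((S ∩ G.inci t) ∩ {c | f ∈ F c}).Finite :=
    Set.Subsingleton.finite fun c hc c' hc' => hF.eq_of_mem hc.1 hc'.1 hc.2 hc'.2
  rw [hδ, Set.sdiff_sdiff_right_self, Set.inter_union_distrib_left]
  exact ((Set.finite_singleton e).inter_of_right _).union hf

theorem linkable_split_of_isTight (hE : G.InnerEulerian S T)
    (hX : G.IsTight (S \ {e}) P t' (T \ {t'}) X) (ht' : t' ∈ T \ {t}) (hzX : z ∈ X) (hwX : w ∈ X)
    (he : P ⊆ S \ {e}) (hf : P ⊆ S \ {f}) (hL : G.Linkable S T t) :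
    h.split.Linkable (S \ {f}) T t := by
  obtain ⟨F, hF⟩ := hL
  rcases h.linkable_split_or_exists_isTight hF with hL | ⟨A, hA⟩
  · exact hL
  have htX : t ∉ X := hX.disjoint.notMem_of_mem_right ⟨h.terminal, Ne.symm ht'.2⟩
  have heδ := h.mem_inter_inci
  have hFe : ∀ c ∈ (S ∩ G.inci t) \ {e}, F c ⊆ S \ {e} := fun c hc =>
    Set.subset_sdiff_singleton (hF.subset c hc.1)
      fun hec => hc.2 (hF.eq_of_mem hc.1 heδ hec (hF.mem e heδ))
  have hfX : f ∉ h.split.touch (A \ X) := by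
    rintro ⟨v, hv, -, hvX⟩
    rw [h.inc_split_of_ne h.ne, h.inc_right, Sym2.mem_iff] at hv
    rcases hv with rfl | rfl <;> exact hvX ‹_›
  have hlink : h.split.IsLinkage ((S \ {f}) ∩ h.split.touch (A \ X)) t (A \ X)ᶜ
      ((S ∩ G.inci t) \ {e}) fun c => F c ∩ h.split.touch (A \ X) :=
    (((hF.mono Set.sdiff_subset hFe subset_rfl).congr_graph fun c hc g hg =>
      (h.inc_split_of_ne (hFe c hc hg).2).symm).inter_touch (X := A \ X) ⟨hA.mem, htX⟩
      (hA.disjoint.mono_left Set.sdiff_subset)).mono subset_rfl (fun c hc g hg =>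
        ⟨⟨hF.subset c hc.1 hg.1, fun hgf => hfX (hgf ▸ hg.2)⟩, hg.2⟩) subset_rfl
  have hcut : (⋃ c ∈ (S ∩ G.inci t) \ {e}, F c ∩ h.split.touch (A \ X)) ∩ h.split.cut X ⊆
      (S \ {e}) ∩ G.cut X := fun g ⟨hg, hgX⟩ => by
    obtain ⟨c, hc, hgc, -⟩ := Set.mem_iUnion₂.1 hg
    exact ⟨hFe c hc hgc, (h.mem_cut_split_of_ne (hFe c hc hgc).2).1 hgX⟩
  obtain ⟨I, hI⟩ := hX.exists_inner
  obtain ⟨F', hF'⟩ := hA.exists_isLinkage_of_isFan htX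
    (hA.disjoint.notMem_of_mem_right ht') hlink (((hI.mono subset_rfl hcut).congr_graph
      (fun g hg => (h.inc_split_of_ne (he hg).2).symm)
      fun g hg => (h.inc_split_of_ne (hcut hg).1.2).symm).mono hf subset_rfl)
  rw [← h.inter_inci_split h.terminal h.end_ne.symm] at hF' heδ
  exact hF'.linkable_of_innerEulerian (h.innerEulerian_split hE) heδ.1 heδ.2

end IsSplitPair

end SplittingOff

section RemovableSets

variable {S Z : Set E} {T : Set V} {t t' x z w s : V} {c e f g : E} {F Φ : E → Set E}

/-- `Z` is a set of edges containing a path that starts at the terminal `t` with the edge `e` and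
ends at the terminal `s`, such that deleting `Z` from `S` preserves the linkability condition and
at most one edge of `Z` is incident with each of `t` and `s`, and none with any other terminal. -/
structure IsRemovable (G : Multigraph V E) (S : Set E) (T : Set V) (t : V) (e : E) (s : V)
    (Z : Set E) : Prop where
  subset : Z ⊆ S
  mem : e ∈ Z
  mem_terminals : s ∈ T
  ne : s ≠ t
  reach : G.Reach Z t s
  eq_of_incident : ∀ g ∈ Z, t ∈ G.inc g → g = e
  subsingleton : (Z ∩ G.inci s).Subsingleton
  eq_or_eq_of_mem : ∀ g ∈ Z, ∀ x ∈ T, x ∈ G.inc g → x = t ∨ x = s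
  linkable : ∀ x ∈ T, G.Linkable (S \ Z) T x

theorem IsSplitPair.reach_insert_of_split {u v : V} (h : G.IsSplitPair S T t e z f w)
    (he : e ∈ Z) (hr : h.split.Reach Z u v) : G.Reach (insert f Z) u v := by
  have hnew : G.Reach (insert f Z) t w :=
    (Reach.single (Set.mem_insert_of_mem f he) h.inc_left).trans
      (Reach.single (Set.mem_insert f Z) h.inc_right)
  induction hr with
  | refl => rfl
  | tail _ hstep ih =>
    obtain ⟨g, hg, hinc⟩ := hstep
    refine ih.trans ?_
    obtain rfl | hge := eq_or_ne g e
    · rw [h.inc_split_self, Sym2.eq_iff] at hinc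
      rcases hinc with ⟨rfl, rfl⟩ | ⟨rfl, rfl⟩
      exacts [hnew, hnew.symm]
    · exact Reach.single (Set.mem_insert_of_mem f hg) (h.inc_split_of_ne hge ▸ hinc)

theorem IsSplitPair.linkable_sdiff_insert (h : G.IsSplitPair S T t e z f w) (he : e ∈ Z)
    (hL : h.split.Linkable ((S \ {f}) \ Z) T x) : G.Linkable (S \ insert f Z) T x := by
  obtain ⟨F, hF⟩ := hL
  have hinc : ∀ g ∈ (S \ {f}) \ Z, h.split.inc g = G.inc g := fun g hg =>
    h.inc_split_of_ne fun hge => hg.2 (hge ▸ he)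
  have hδ : ((S \ {f}) \ Z) ∩ h.split.inci x = ((S \ {f}) \ Z) ∩ G.inci x :=
    Set.ext fun g => and_congr_right fun hg => by simp only [inci, Set.mem_ofPred_eq, hinc g hg]
  rw [Set.insert_eq, ← Set.sdiff_sdiff]
  exact ⟨F, hδ ▸ hF.congr_graph fun c hc g hg => hinc g (hF.subset c hc hg)⟩

theorem IsRemovable.of_split (h : G.IsSplitPair S T t e z f w)
    (hZ : h.split.IsRemovable (S \ {f}) T t e s Z) : G.IsRemovable S T t e s (insert f Z) where
  subset := Set.insert_subset h.mem_right (hZ.subset.trans Set.sdiff_subset)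
  mem := Set.mem_insert_of_mem f hZ.mem
  mem_terminals := hZ.mem_terminals
  ne := hZ.ne
  reach := h.reach_insert_of_split hZ.mem hZ.reach
  eq_of_incident := Set.forall_mem_insert.2
    ⟨fun htf => absurd (h.eq_of_mem_inc_right h.terminal htf).symm h.end_ne,
      fun g hg htg => hZ.eq_of_incident g hg (h.mem_inc_split h.terminal htg)⟩
  subsingleton := by
    have hs : ∀ g ∈ Z, s ∈ G.inc g → g ∈ Z ∩ h.split.inci s ∧ g ≠ e := fun g hg hsg =>
      ⟨⟨hg, h.mem_inc_split hZ.mem_terminals hsg⟩, fun hge =>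
        hZ.ne (h.eq_of_mem_inc_left hZ.mem_terminals (hge ▸ hsg))⟩
    by_cases hsw : s = w
    · have he : e ∈ Z ∩ h.split.inci s :=
        ⟨hZ.mem, show s ∈ h.split.inc e by rw [h.inc_split_self, hsw]; exact Sym2.mem_mk_right t w⟩
      refine Set.subsingleton_of_forall_eq f fun g hg => hg.1.resolve_right fun hgZ => ?_
      exact (hs g hgZ hg.2).2 (hZ.subsingleton (hs g hgZ hg.2).1 he)
    · refine hZ.subsingleton.anti fun g hg => (hs g (hg.1.resolve_left ?_) hg.2).1
      rintro rfl
      exact hsw (h.eq_of_mem_inc_right hZ.mem_terminals hg.2)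
  eq_or_eq_of_mem := Set.forall_mem_insert.2
    ⟨fun x hx hxf => hZ.eq_or_eq_of_mem e hZ.mem x hx (by
      rw [h.eq_of_mem_inc_right hx hxf, h.inc_split_self]; exact Sym2.mem_mk_right t w),
      fun g hg x hx hxg => hZ.eq_or_eq_of_mem g hg x hx (h.mem_inc_split hx hxg)⟩
  linkable x hx := h.linkable_sdiff_insert hZ.mem (hZ.linkable x hx)

theorem Linkable.sdiff_singleton (ht : t ∈ T) (hz : z ∈ T) (hinc : G.inc e = s(t, z))
    (hL : G.Linkable S T x) : G.Linkable (S \ {e}) T x := by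
  obtain ⟨F, hF⟩ := hL
  have hsub : (S \ {e}) ∩ G.inci x ⊆ S ∩ G.inci x :=
    Set.inter_subset_inter_left _ Set.sdiff_subset
  refine ⟨fun c => F c \ {e}, hF.restrict hsub (fun _ _ _ _ => Iff.rfl) (fun c hc =>
    ⟨⟨hF.mem c (hsub hc), hc.1.2⟩, fun g hg => ⟨hg.1, hF.subset c (hsub hc) hg.1, hg.2⟩⟩)
    fun c hc => ?_⟩
  obtain ⟨s, hs, hr⟩ := hF.reach c (hsub hc)
  by_cases hxe : x ∈ G.inc e
  · refine ⟨s, hs, hr.mono (Set.subset_sdiff_singleton subset_rfl fun he => hc.1.2 ?_)⟩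
    exact (hF.eq_of_incident c (hsub hc) e he hxe).symm
  · rw [hinc, Sym2.mem_iff, not_or] at hxe
    rcases hr.avoid_edge hinc with hr | hr | hr
    exacts [⟨s, hs, hr⟩, ⟨t, ⟨ht, Ne.symm hxe.1⟩, hr⟩, ⟨z, ⟨hz, Ne.symm hxe.2⟩, hr⟩]

theorem isRemovable_singleton (ht : t ∈ T) (hz : z ∈ T) (he : e ∈ S) (hinc : G.inc e = s(t, z))
    (hL : ∀ x ∈ T, G.Linkable S T x) : G.IsRemovable S T t e z {e} where
  subset := Set.singleton_subset_iff.2 he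
  mem := rfl
  mem_terminals := hz
  ne := (ne_of_inc_eq hinc).symm
  reach := Reach.single rfl hinc
  eq_of_incident _ hg _ := hg
  subsingleton := Set.subsingleton_singleton.anti Set.inter_subset_left
  eq_or_eq_of_mem := by rintro g rfl x - hx; rwa [hinc, Sym2.mem_iff] at hx
  linkable x hx := (hL x hx).sdiff_singleton ht hz hinc

theorem Reach.exists_finset {u v : V} (h : G.Reach S u v) :
    ∃ Z : Finset E, ↑Z ⊆ S ∧ G.Reach (Z : Set E) u v := by
  classical
  obtain ⟨l, hl, hlS, -⟩ := h.exists_nodup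
  refine ⟨(l.map Prod.fst).toFinset, fun g hg => ?_, hl.reach fun d hd => ?_⟩
  · obtain ⟨d, hd, rfl⟩ := List.mem_map.1 (List.mem_toFinset.1 hg)
    exact hlS d hd
  · exact List.mem_toFinset.2 (List.mem_map_of_mem hd)

namespace IsSplitPair

variable (h : G.IsSplitPair S T t e z f w) (hΦ : G.IsLinkage S t' (T \ {t'}) (S ∩ G.inci t') Φ)
  (hn : ¬G.Linkable (S \ {e}) T t') (hc : c ∈ S ∩ G.inci t') (hec : e ∈ Φ c) (hfc : f ∈ Φ c)

include h hΦ hc hec hfc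

include hn in
theorem linkable_split_of_ne (hE : G.InnerEulerian S T) (hL : ∀ x ∈ T, G.Linkable S T x)
    (ht' : t' ∈ T \ {t})
    (hX : G.IsTight (S \ {e}) (⋃ c' ∈ (S ∩ G.inci t') \ {c}, Φ c') t' (T \ {t'}) X)
    (hzX : z ∈ X) (hwX : w ∈ X) (hx : x ∈ T) (hxt' : x ≠ t') :
    h.split.Linkable (S \ {f}) T x := by
  obtain rfl | hxt := eq_or_ne x t
  · exact h.linkable_split_of_isTight hE hX ht' hzX hwX (hΦ.biUnion_sdiff_subset hc hec)
      (hΦ.biUnion_sdiff_subset hc hfc) (hL x hx)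
  · exact h.linkable_split_of_sdiff_singleton hE hx hxt
      ((Linkable.sdiff_singleton_or h.terminal h.notMem h.inc_left ⟨hx, hxt⟩ ht' hxt' (hL x hx)
        (hL t' ht'.1)).resolve_right hn)

theorem linkable_split_of_end_eq (ht' : t' ∈ T) (hw : w = t') :
    h.split.Linkable (S \ {f}) T w := by
  subst hw
  obtain rfl : f = c := hΦ.eq_of_incident c hc f hfc (h.inc_right ▸ Sym2.mem_mk_right z w)
  exact h.linkable_split_end ht' (hΦ.mono Set.sdiff_subset (fun c' hc' => hΦ.subset c' hc'.1)
    subset_rfl) (fun c' hc' hec' => hc'.2 (hΦ.eq_of_mem hc'.1 hc hec' hec))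
    fun c' hc' hfc' => hc'.2 (hΦ.eq_of_mem hc'.1 hc hfc' hfc)

theorem isLinkage_split_of_reach (ht' : t' ∈ T \ {t}) (htw : t' ≠ w)
    (hr : G.Reach ((Φ c \ {e}) \ {f}) w t') :
    h.split.IsLinkage (S \ {f}) t' (T \ {t'}) ((S \ {f}) ∩ h.split.inci t')
      fun c' => Φ c' \ {f} := by
  rw [h.inter_inci_split ht'.1 htw]
  exact h.isLinkage_split_of_mem ht'.1 htw hΦ hc hec hfc ⟨t, ⟨h.terminal, Ne.symm ht'.2⟩,
    (h.reach_split hr).symm.trans (Reach.single (F := Φ c \ {f}) ⟨hec, h.ne.symm⟩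
      (h.inc_split_self.trans Sym2.eq_swap))⟩

omit hΦ hc hec hfc in
theorem isLinkage_split_terminal (hF : G.IsLinkage S t (T \ {t}) (S ∩ G.inci t) F) (hf : f ∈ F e)
    (hs : s ∈ T \ {t}) (hr : G.Reach ((F e \ {e}) \ {f}) w s) :
    h.split.IsLinkage (S \ {f}) t (T \ {t}) ((S \ {f}) ∩ h.split.inci t) fun c => F c \ {f} := by
  have he := hF.mem e h.mem_inter_inci
  rw [h.inter_inci_split h.terminal h.end_ne.symm]
  exact h.isLinkage_split_of_mem h.terminal h.end_ne.symm hF h.mem_inter_inci he hf ⟨s, hs,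
    (Reach.single (F := F e \ {f}) ⟨he, h.ne.symm⟩ h.inc_split_self).trans (h.reach_split hr)⟩

end IsSplitPair

theorem IsLinkage.exists_isSplitPair_of_not_linkable (hE : G.InnerEulerian S T)
    (hL : ∀ x ∈ T, G.Linkable S T x) (ht : t ∈ T) (he : e ∈ S) (hinc : G.inc e = s(t, z))
    (hz : z ∉ T) (ht' : t' ∈ T \ {t}) (hn : ¬G.Linkable (S \ {e}) T t')
    (hΦ : G.IsLinkage S t' (T \ {t'}) (S ∩ G.inci t') Φ) (hc : c ∈ S ∩ G.inci t')
    (hec : e ∈ Φ c) (hZ : Z ⊆ Φ c \ {e}) (hr : G.Reach Z z t') :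
    ∃ f ∈ Z, ∃ w, ∃ h : G.IsSplitPair S T t e z f w, G.Reach (Z \ {f}) w t' ∧
      (w ∈ T → w = t') ∧ ∀ x ∈ T, x ≠ t' → h.split.Linkable (S \ {f}) T x := by
  have het' := notMem_inc_of_mem_sdiff hinc hz ht'
  obtain ⟨f, hfZ, w, hinc', hr⟩ := hr.exists_first_edge fun h => hz (h ▸ ht'.1)
  obtain ⟨hfc, hfe⟩ := hZ hfZ
  obtain ⟨X, hX, hreachX⟩ := hΦ.exists_isTight_of_not_linkable het' hn hc hec
  have hwX : w ∈ X := hreachX w (hr.mono (Set.sdiff_subset.trans hZ)).symm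
  have hzX : z ∈ X :=
    hreachX z (hΦ.reach_of_not_linkable het' hn hc hec ⟨ht, Ne.symm ht'.2⟩ hinc)
  have hXT : ∀ x ∈ T, x ∈ X → x = t' := fun x hx hxX =>
    by_contra fun hne => hX.disjoint.notMem_of_mem_left hxX ⟨hx, hne⟩
  have h : G.IsSplitPair S T t e z f w := ⟨ht, hz, he, hΦ.subset c hc hfc, hfe, hinc, hinc',
    fun hwt => ht'.2 (hXT t ht (hwt ▸ hwX)).symm⟩
  exact ⟨f, hfZ, w, h, hr, fun hw => hXT w hw hwX, fun x hx hxt' =>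
    h.linkable_split_of_ne hΦ hn hc hec hfc hE hL ht' hX hzX hwX hx hxt'⟩

theorem exists_isRemovable_of_not_linkable {Z : Finset E} (hE : G.InnerEulerian S T)
    (hL : ∀ x ∈ T, G.Linkable S T x) (ht : t ∈ T) (he : e ∈ S) (hinc : G.inc e = s(t, z))
    (hz : z ∉ T) (ht' : t' ∈ T \ {t}) (hn : ¬G.Linkable (S \ {e}) T t')
    (hΦ : G.IsLinkage S t' (T \ {t'}) (S ∩ G.inci t') Φ) (hc : c ∈ S ∩ G.inci t')
    (hec : e ∈ Φ c) (hZ : ↑Z ⊆ Φ c \ {e}) (hr : G.Reach (Z : Set E) z t') :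
    ∃ s Y, G.IsRemovable S T t e s Y := by
  classical
  induction Z using Finset.strongInduction generalizing G S z Φ with
  | H Z ih =>
  obtain ⟨f, hfZ, w, h, hr, hwT, hne⟩ :=
    hΦ.exists_isSplitPair_of_not_linkable hE hL ht he hinc hz ht' hn hc hec hZ hr
  have hfc := (hZ hfZ).1
  suffices ∃ s Y, h.split.IsRemovable (S \ {f}) T t e s Y by
    obtain ⟨s, Y, hY⟩ := this
    exact ⟨s, _, hY.of_split h⟩
  by_cases hw : w ∈ T
  · obtain rfl := hwT hw
    refine ⟨w, _, isRemovable_singleton ht hw ⟨he, h.ne.symm⟩ h.inc_split_self fun x hx => ?_⟩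
    obtain rfl | hxw := eq_or_ne x w
    exacts [h.linkable_split_of_end_eq hΦ hc hec hfc hx rfl, hne x hx hxw]
  · have htw : t' ≠ w := fun htw => hw (htw ▸ ht'.1)
    have hΦ' := h.isLinkage_split_of_reach hΦ hc hec hfc ht' htw
      (hr.mono (Set.sdiff_subset_sdiff_left hZ))
    refine ih (Z.erase f) (Finset.erase_ssubset hfZ) (h.innerEulerian_split hE) (fun x hx => ?_)
      ⟨he, h.ne.symm⟩ h.inc_split_self hw (h.not_linkable_split ht'.1 ht'.2 htw hn) hΦ'
      (h.inter_inci_split ht'.1 htw ▸ hc) ⟨hec, h.ne.symm⟩ ?_ ?_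
    · obtain rfl | hxt' := eq_or_ne x t'
      exacts [⟨_, hΦ'⟩, hne x hx hxt']
    · rw [Finset.coe_erase]
      exact fun g hg => ⟨⟨(hZ hg.1).1, hg.2⟩, (hZ hg.1).2⟩
    · rw [Finset.coe_erase]
      exact hr.congr fun g hg => (h.inc_split_of_ne (hZ hg.1).2).symm

theorem IsLinkage.exists_isRemovable_of_reach {Z : Finset E} (hE : G.InnerEulerian S T)
    (hL : ∀ x ∈ T, G.Linkable S T x) (ht : t ∈ T) (he : e ∈ S) (hinc : G.inc e = s(t, z))
    (hF : G.IsLinkage S t (T \ {t}) (S ∩ G.inci t) F) (hs : s ∈ T \ {t})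
    (hZ : ↑Z ⊆ F e \ {e}) (hr : G.Reach (Z : Set E) z s) :
    ∃ s Y, G.IsRemovable S T t e s Y := by
  classical
  induction Z using Finset.strongInduction generalizing G S z F with
  | H Z ih =>
  by_cases hz : z ∈ T
  · exact ⟨z, _, isRemovable_singleton ht hz he hinc hL⟩
  by_cases hess : ∃ t' ∈ T \ {t}, ¬G.Linkable (S \ {e}) T t'
  · obtain ⟨t', ht', hn⟩ := hess
    have het' := notMem_inc_of_mem_sdiff hinc hz ht'
    obtain ⟨Φ, hΦ⟩ := hL t' ht'.1
    obtain ⟨c, hc, hec⟩ := hΦ.exists_mem_of_not_linkable het' hn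
    obtain ⟨Y, hY, hr'⟩ := (hΦ.reach_of_not_linkable het' hn hc hec
      ⟨ht, Ne.symm ht'.2⟩ hinc).symm.exists_finset
    exact exists_isRemovable_of_not_linkable hE hL ht he hinc hz ht' hn hΦ hc hec hY hr'
  push Not at hess
  have heδ : e ∈ S ∩ G.inci t := ⟨he, show t ∈ G.inc e from hinc ▸ Sym2.mem_mk_left t z⟩
  obtain ⟨f, hfZ, w, hinc', hr⟩ := hr.exists_first_edge fun h => hz (h ▸ hs.1)
  obtain ⟨hfe, hne⟩ := hZ hfZ
  have h : G.IsSplitPair S T t e z f w := ⟨ht, hz, he, hF.subset e heδ hfe, hne, hinc, hinc', by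
    rintro rfl
    exact hne (hF.eq_of_incident e heδ f hfe (hinc' ▸ Sym2.mem_mk_right z w))⟩
  have hF' := h.isLinkage_split_terminal hF hfe hs (hr.mono (Set.sdiff_subset_sdiff_left hZ))
  obtain ⟨s, Y, hY⟩ := ih (Z.erase f) (Finset.erase_ssubset hfZ) (h.innerEulerian_split hE)
    (fun x hx => by
      obtain rfl | hxt := eq_or_ne x t
      exacts [⟨_, hF'⟩, h.linkable_split_of_sdiff_singleton hE hx hxt (hess x ⟨hx, hxt⟩)])
    ⟨he, h.ne.symm⟩ h.inc_split_self hF'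
    (by rw [Finset.coe_erase]; exact fun g hg => ⟨⟨(hZ hg.1).1, hg.2⟩, (hZ hg.1).2⟩)
    (by
      rw [Finset.coe_erase]
      exact hr.congr fun g hg => (h.inc_split_of_ne (hZ hg.1).2).symm)
  exact ⟨s, _, hY.of_split h⟩

theorem exists_isRemovable (hE : G.InnerEulerian S T) (hL : ∀ x ∈ T, G.Linkable S T x)
    (ht : t ∈ T) (he : e ∈ S ∩ G.inci t) : ∃ s Z, G.IsRemovable S T t e s Z := by
  obtain ⟨F, hF⟩ := hL t ht
  obtain ⟨s, hs, hr⟩ := hF.reach e he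
  obtain ⟨f, hf, z, hinc, hr⟩ := hr.exists_first_edge (Ne.symm hs.2)
  obtain rfl := hF.eq_of_incident e he f hf (hinc ▸ Sym2.mem_mk_left t z)
  obtain ⟨Z, hZ, hr⟩ := hr.exists_finset
  exact hF.exists_isRemovable_of_reach hE hL ht he.1 hinc hs hZ hr

end RemovableSets

section TPaths

variable {S Z D : Set E} {T X : Set V} {t u w x s : V} {e : E} {F : Set E} {l : List (E × V)}

theorem Walk.exists_isDartWalk (p : G.Walk u w) :
    ∃ l, G.IsDartWalk u l w ∧ l.map Prod.fst = p.edges ∧ u :: l.map Prod.snd = p.support := by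
  induction p with
  | nil v => exact ⟨[], rfl, rfl, rfl⟩
  | @cons u v w e he p ih =>
    obtain ⟨l, hl, hedges, hsupport⟩ := ih
    exact ⟨(e, v) :: l, ⟨he, hl⟩, by simp [Walk.edges, hedges], by simp [Walk.support, hsupport]⟩

theorem IsDartWalk.exists_walk (h : G.IsDartWalk u l w) :
    ∃ p : G.Walk u w, p.edges = l.map Prod.fst ∧ p.support = u :: l.map Prod.snd := by
  induction l generalizing u with
  | nil => cases h; exact ⟨.nil _, rfl, rfl⟩
  | cons d l ih =>
    obtain ⟨p, hedges, hsupport⟩ := ih h.2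
    exact ⟨.cons d.1 h.1 p, by simp [Walk.edges, hedges], by simp [Walk.support, hsupport]⟩

theorem IsDartWalk.subsingleton_inter_inci_left (h : G.IsDartWalk u l w)
    (hnodup : (u :: l.map Prod.snd).Nodup) :
    ({e | e ∈ l.map Prod.fst} ∩ G.inci u).Subsingleton := by
  cases l with
  | nil => simp
  | cons c l =>
    refine Set.subsingleton_of_forall_eq c.1 fun e ⟨he, hue⟩ => ?_
    refine (List.mem_cons.1 he).resolve_right fun he => (List.nodup_cons.1 hnodup).1 ?_
    obtain ⟨d, hd, rfl⟩ := List.mem_map.1 he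
    exact h.2.mem_support hd hue

theorem IsDartWalk.subsingleton_inter_inci_right (h : G.IsDartWalk u l w)
    (hnodup : (u :: l.map Prod.snd).Nodup) :
    ({e | e ∈ l.map Prod.fst} ∩ G.inci w).Subsingleton := by
  obtain rfl | ⟨l, c, rfl⟩ := l.eq_nil_or_concat'
  · simp
  obtain ⟨v, hl, hv⟩ := isDartWalk_append.1 h
  obtain rfl : c.2 = w := hv.2
  rw [List.map_append, ← List.cons_append, List.nodup_append] at hnodup
  refine Set.subsingleton_of_forall_eq c.1 fun e ⟨he, hwe⟩ => ?_
  rw [Set.mem_ofPred_eq, List.map_append, List.mem_append] at he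
  refine List.mem_singleton.1 (he.resolve_left fun he => ?_)
  obtain ⟨d, hd, rfl⟩ := List.mem_map.1 he
  exact hnodup.2.2 _ (hl.mem_support hd hwe) _ (by simp) rfl

theorem Walk.exists_mem_edges_left (p : G.Walk u w) (h : u ≠ w) :
    ∃ e ∈ p.edges, u ∈ G.inc e := by
  cases p with
  | nil => exact absurd rfl h
  | @cons _ v _ e he p => exact ⟨e, by simp [Walk.edges], he ▸ Sym2.mem_mk_left u v⟩

theorem Walk.exists_mem_edges_right (p : G.Walk u w) (h : u ≠ w) :
    ∃ e ∈ p.edges, w ∈ G.inc e := by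
  induction p with
  | nil => exact absurd rfl h
  | @cons u v w e he p ih =>
    obtain rfl | hvw := eq_or_ne v w
    · exact ⟨e, by simp [Walk.edges], he ▸ Sym2.mem_mk_right u v⟩
    · obtain ⟨f, hf, hwf⟩ := ih hvw
      exact ⟨f, by simp [Walk.edges, hf], hwf⟩

theorem TPath.eq_first_or_eq_last (p : G.TPath T) (hx : x ∈ T) (he : e ∈ p.walk.edges)
    (hxe : x ∈ G.inc e) : x = p.first ∨ x = p.last := by
  obtain ⟨l, hl, hedges, hsupport⟩ := p.walk.exists_isDartWalk
  rw [← hedges] at he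
  obtain ⟨d, hd, rfl⟩ := List.mem_map.1 he
  exact p.internal x (hsupport ▸ hl.mem_support hd hxe) hx

theorem TPath.subsingleton_edges_inter_inci (p : G.TPath T) (hx : x ∈ T) :
    ({e | e ∈ p.walk.edges} ∩ G.inci x).Subsingleton := by
  rintro e he f hf
  obtain ⟨l, hl, hedges, hsupport⟩ := p.walk.exists_isDartWalk
  have hnodup := p.support_nodup
  rw [← hsupport] at hnodup
  have hend := p.eq_first_or_eq_last hx he.1 he.2
  rw [← hedges] at he hf
  rcases hend with rfl | rfl
  exacts [hl.subsingleton_inter_inci_left hnodup he hf,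
    hl.subsingleton_inter_inci_right hnodup he hf]

theorem TPath.exists_reach (p : G.TPath T) (hx : x ∈ T) (he : e ∈ p.walk.edges)
    (hxe : x ∈ G.inc e) : ∃ s ∈ T \ {x}, G.Reach {f | f ∈ p.walk.edges} x s := by
  obtain ⟨l, hl, hedges, -⟩ := p.walk.exists_isDartWalk
  have hr : G.Reach {f | f ∈ p.walk.edges} p.first p.last :=
    hl.reach fun d hd => hedges ▸ List.mem_map_of_mem hd
  rcases p.eq_first_or_eq_last hx he hxe with rfl | rfl
  exacts [⟨p.last, ⟨p.last_mem, p.ne.symm⟩, hr⟩, ⟨p.first, ⟨p.first_mem, p.ne⟩, hr.symm⟩]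

theorem TPath.even_ncard_edges_inter_cut (p : G.TPath T) (hX : X ⊆ Tᶜ) :
    Even ({e | e ∈ p.walk.edges} ∩ G.cut X).ncard := by
  obtain ⟨l, hl, hedges, hsupport⟩ := p.walk.exists_isDartWalk
  rw [← hedges, hl.even_ncard_cut (hl.edges_nodup (hsupport ▸ p.support_nodup))]
  exact iff_of_false (fun h => hX h p.first_mem) fun h => hX h p.last_mem

theorem Reach.exists_TPath (h : G.Reach F x s) (hx : x ∈ T) (hs : s ∈ T \ {x}) :
    ∃ p : G.TPath T, p.first = x ∧ ∀ e ∈ p.walk.edges, e ∈ F := by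
  obtain ⟨l, hl, hlF, hnodup⟩ := h.exists_nodup
  obtain ⟨l₁, d, l₂, v, rfl, hl₁, hinc, -, hd, hfirst⟩ :=
    hl.exists_first_mem (Z := T \ {x}) (fun h => h.2 rfl) hs
  rw [List.append_cons] at hlF hnodup
  obtain ⟨p, hedges, hsupport⟩ :=
    (isDartWalk_append.2 ⟨v, hl₁, hinc, rfl⟩ : G.IsDartWalk x (l₁ ++ [d]) d.2).exists_walk
  refine ⟨⟨x, d.2, p, hx, hd.1, Ne.symm hd.2, ?_, fun y hy hyT => ?_⟩, rfl, fun e he => ?_⟩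
  · rw [List.map_append, ← List.cons_append] at hnodup
    exact hsupport ▸ (List.nodup_append.1 hnodup).1
  · rw [hsupport] at hy
    simp only [List.map_append, List.map_cons, List.map_nil, List.mem_cons, List.mem_append,
      List.mem_map, List.not_mem_nil, or_false] at hy
    rcases hy with rfl | ⟨d', hd', rfl⟩ | rfl
    · exact Or.inl rfl
    · exact Or.inl (by_contra fun hne => hfirst d' hd' ⟨hyT, hne⟩)
    · exact Or.inr rfl
  · obtain ⟨d', hd', rfl⟩ := List.mem_map.1 (hedges ▸ he : e ∈ (l₁ ++ [d]).map Prod.fst)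
    exact hlF d' (List.mem_append_left l₂ hd')

theorem Linkable.exists_TPathDisjoint (hx : x ∈ T) (h : G.Linkable Set.univ T x) :
    ∃ P : Set (G.TPath T), G.TPathDisjoint P ∧ ∀ e ∈ G.inci x, ∃ p ∈ P, e ∈ p.walk.edges := by
  obtain ⟨F, hF⟩ := h
  rw [Set.univ_inter] at hF
  have hpath : ∀ c : G.inci x, ∃ p : G.TPath T, c.1 ∈ p.walk.edges ∧
      ∀ e ∈ p.walk.edges, e ∈ F c := fun c => by
    obtain ⟨s, hs, hr⟩ := hF.reach c c.2
    obtain ⟨p, rfl, hpF⟩ := hr.exists_TPath hx hs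
    obtain ⟨e, he, hxe⟩ := p.walk.exists_mem_edges_left p.ne
    exact ⟨p, hF.eq_of_incident c c.2 e (hpF e he) hxe ▸ he, hpF⟩
  choose p hcp hpF using hpath
  refine ⟨Set.range p, ?_, fun e he => ⟨_, ⟨⟨e, he⟩, rfl⟩, hcp ⟨e, he⟩⟩⟩
  rintro _ ⟨c, rfl⟩ _ ⟨c', rfl⟩ hne e he he'
  exact hne (congrArg p (Subtype.ext (hF.eq_of_mem c.2 c'.2 (hpF c e he) (hpF c' e he'))))

theorem TPathDisjoint.linkable {P : Set (G.TPath T)} (hx : x ∈ T) (hP : G.TPathDisjoint P)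
    (hcover : ∀ e ∈ G.inci x, ∃ p ∈ P, e ∈ p.walk.edges) : G.Linkable Set.univ T x := by
  have hF : ∀ c : E, ∃ F : Set E, c ∈ G.inci x →
      ∃ p ∈ P, c ∈ p.walk.edges ∧ F = {e | e ∈ p.walk.edges} := fun c => by
    by_cases hc : c ∈ G.inci x
    · obtain ⟨p, hp, hcp⟩ := hcover c hc
      exact ⟨_, fun _ => ⟨p, hp, hcp, rfl⟩⟩
    · exact ⟨∅, fun h => absurd h hc⟩
  choose F hF using hF
  rw [Linkable, Set.univ_inter]
  refine ⟨F, fun _ _ => Set.subset_univ _, fun c hc => ?_, fun _ hc => hc, fun c hc => ?_,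
    fun c hc => ?_, fun c hc c' hc' hne => Set.disjoint_left.2 fun e he he' => hne ?_⟩
  all_goals obtain ⟨p, hp, hcp, hFc⟩ := hF c hc
  · exact hFc ▸ hcp
  · exact hFc ▸ fun e he hxe => p.subsingleton_edges_inter_inci hx ⟨he, hxe⟩ ⟨hcp, hc⟩
  · exact hFc ▸ p.exists_reach hx hcp hc
  · obtain ⟨p', hp', hcp', hFc'⟩ := hF c' hc'
    rw [hFc] at he
    rw [hFc'] at he'
    obtain rfl : p = p' := by_contra fun hpp' => hP p hp p' hp' hpp' e he he'
    exact p.subsingleton_edges_inter_inci hx ⟨hcp, hc⟩ ⟨hcp', hc'⟩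

theorem innerEulerian_univ_iff : G.InnerEulerian Set.univ T ↔
    ∀ X ⊆ Tᶜ, ¬((G.cut X).Finite ∧ Odd (G.cut X).ncard) := by
  simp only [InnerEulerian, Set.univ_inter, not_and, Nat.not_odd_iff_even]

theorem Linkable.deleteEdges (h : G.Linkable (Set.univ \ Z) T x) (hDZ : D ⊆ Z)
    (hZD : Z ∩ G.inci x ⊆ D) : (G.deleteEdges D).Linkable Set.univ T x := by
  obtain ⟨F, hF⟩ := h
  have hmem : ∀ c ∈ Set.univ ∩ (G.deleteEdges D).inci x, c.1 ∈ (Set.univ \ Z) ∩ G.inci x :=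
    fun c hc => ⟨⟨trivial, fun hcZ => c.2 (hZD ⟨hcZ, hc.2⟩)⟩, hc.2⟩
  refine ⟨fun c => Subtype.val ⁻¹' F c, fun _ _ => Set.subset_univ _, fun c hc =>
    hF.mem _ (hmem c hc), fun _ hc => hc.2, fun c hc e he hxe =>
      Subtype.ext (hF.eq_of_incident _ (hmem c hc) _ he hxe), fun c hc => ?_,
    fun c hc c' hc' hne => Set.disjoint_left.2 fun e he he' =>
      hne (Subtype.ext (hF.eq_of_mem (hmem c hc) (hmem c' hc') he he'))⟩
  obtain ⟨s, hs, hr⟩ := hF.reach _ (hmem c hc)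
  refine ⟨s, hs, Relation.ReflTransGen.mono ?_ _ _ hr⟩
  rintro a b ⟨e, he, hinc⟩
  exact ⟨⟨e, fun heD => (hF.subset _ (hmem c hc) he).2 (hDZ heD)⟩, he, hinc⟩

theorem InnerEulerian.deleteEdges (hE : G.InnerEulerian Set.univ T) (hD : D.Finite)
    (heven : ∀ X ⊆ Tᶜ, Even (D ∩ G.cut X).ncard) :
    (G.deleteEdges D).InnerEulerian Set.univ T := by
  intro X hX hfin
  rw [Set.univ_inter] at hfin ⊢
  have hval : Subtype.val '' (G.deleteEdges D).cut X = Dᶜ ∩ G.cut X :=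
    Subtype.image_preimage_coe Dᶜ (G.cut X)
  have hfin' : (Dᶜ ∩ G.cut X).Finite := hval ▸ hfin.image Subtype.val
  have hDfin := hD.inter_of_left (G.cut X)
  have hcut : G.cut X = (Dᶜ ∩ G.cut X) ∪ (D ∩ G.cut X) := by
    rw [← Set.union_inter_distrib_right, Set.compl_union_self, Set.univ_inter]
  have hdisj : Disjoint (Dᶜ ∩ G.cut X) (D ∩ G.cut X) :=
    disjoint_compl_left.mono Set.inter_subset_left Set.inter_subset_left
  have heven' := hE X hX (by rw [Set.univ_inter, hcut]; exact hfin'.union hDfin)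
  rw [Set.univ_inter, hcut, Set.ncard_union_eq hdisj hfin' hDfin, ← hval,
    Set.ncard_image_of_injective _ Subtype.val_injective] at heven'
  exact (Nat.even_add.1 heven').2 (heven X hX)

theorem IsRemovable.inter_inci_subset_edges (hZ : G.IsRemovable S T t e s Z) {p : G.TPath T}
    (hp : p.first = t) (hpZ : ∀ g ∈ p.walk.edges, g ∈ Z) (hx : x ∈ T) :
    Z ∩ G.inci x ⊆ {g | g ∈ p.walk.edges} := by
  subst hp
  obtain ⟨f, hf, hsf⟩ := p.walk.exists_mem_edges_right p.ne
  obtain hlast | rfl := hZ.eq_or_eq_of_mem f (hpZ f hf) p.last p.last_mem hsf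
  · exact absurd hlast.symm p.ne
  rintro g ⟨hg, hxg⟩
  rcases hZ.eq_or_eq_of_mem g hg x hx hxg with rfl | rfl
  · obtain ⟨e', he', hte'⟩ := p.walk.exists_mem_edges_left p.ne
    rw [hZ.eq_of_incident g hg hxg, ← hZ.eq_of_incident e' (hpZ e' he') hte']
    exact he'
  · exact hZ.subsingleton ⟨hpZ f hf, hsf⟩ ⟨hg, hxg⟩ ▸ hf

end TPaths

end Multigraph

/-- If `G` is inner Eulerian w.r.t. `T` and the linkability condition holds for
every `t ∈ T`, then for every `t ∈ T` and `e ∈ δ(t)` there is a `T`-path `P`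
through `e` such that after deleting the edges of `P` the linkability condition
still holds for every vertex of `T` and the graph remains inner Eulerian. -/
theorem exists_good_TPath {V : Type u} {E : Type v} (G : Multigraph V E)
    (T : Set V)
    (hEul : ∀ X : Set V, X ⊆ Tᶜ → ¬ ((G.cut X).Finite ∧ Odd (G.cut X).ncard))
    (hlink : ∀ t ∈ T, ∃ Pt : Set (G.TPath T), G.TPathDisjoint Pt ∧
      ∀ e ∈ G.inci t, ∃ p ∈ Pt, e ∈ p.walk.edges) :
    ∀ t ∈ T, ∀ e ∈ G.inci t,
      ∃ P : G.TPath T, e ∈ P.walk.edges ∧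
        (∀ t' ∈ T, ∃ P' : Set ((G.deleteEdges {f | f ∈ P.walk.edges}).TPath T),
          (G.deleteEdges {f | f ∈ P.walk.edges}).TPathDisjoint P' ∧
          ∀ g ∈ (G.deleteEdges {f | f ∈ P.walk.edges}).inci t',
            ∃ q ∈ P', g ∈ q.walk.edges) ∧
        (∀ X : Set V, X ⊆ Tᶜ →
          ¬ (((G.deleteEdges {f | f ∈ P.walk.edges}).cut X).Finite ∧
            Odd ((G.deleteEdges {f | f ∈ P.walk.edges}).cut X).ncard)) := by
  intro t ht e he
  have hE : G.InnerEulerian Set.univ T := Multigraph.innerEulerian_univ_iff.2 hEul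
  have hL : ∀ x ∈ T, G.Linkable Set.univ T x := fun x hx => by
    obtain ⟨P, hP, hcover⟩ := hlink x hx
    exact hP.linkable hx hcover
  obtain ⟨s, Z, hZ⟩ := Multigraph.exists_isRemovable hE hL ht ⟨Set.mem_univ e, he⟩
  obtain ⟨p, hpt, hpZ⟩ := hZ.reach.exists_TPath ht ⟨hZ.mem_terminals, hZ.ne⟩
  have hδ : ∀ x ∈ T, Z ∩ G.inci x ⊆ {f | f ∈ p.walk.edges} := fun x hx =>
    hZ.inter_inci_subset_edges hpt hpZ hx
  refine ⟨p, hδ t ht ⟨hZ.mem, he⟩, fun x hx => ?_, ?_⟩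
  · exact ((hZ.linkable x hx).deleteEdges hpZ (hδ x hx)).exists_TPathDisjoint hx
  · exact Multigraph.innerEulerian_univ_iff.1 (hE.deleteEdges (List.finite_toSet _) fun X hX =>
      p.even_ncard_edges_inter_cut hX)
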